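/- arXiv:2502.04146 — 11 statements merged into one kernel-verified Lean document; each statement's English description precedes it below -/
import Mathlib

section
/- Let (U, φ) be a finite standard closure space whose closure lattice is geometric. Then the E-base of (U, φ) is valid if and only if the essential closed sets of (U, φ) are pairwise incomparable with respect to inclusion. -/
namespace EBaseFormal

open Set

variable {α : Type*}

/-- `φ` is a closure operator on subsets of `α`. -/
def IsClosureOp (φ : Set α → Set α) : Prop :=
  (∀ X, X ⊆ φ X) ∧ (∀ X, φ (φ X) = φ X) ∧ ∀ X Y : Set α, X ⊆ Y → φ X ⊆ φ Y

/-- `C` is a closed set of the closure space. -/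
def IsClosedSet (φ : Set α → Set α) (C : Set α) : Prop :=
  φ C = C

/-- The closure space is standard: `φ {x} \ {x}` is closed for every `x`. -/
def IsStandard (φ : Set α → Set α) : Prop :=
  ∀ x : α, IsClosedSet φ (φ {x} \ {x})

/-- The binary part `φ^b` of the closure operator. -/
def binPart (φ : Set α → Set α) (X : Set α) : Set α :=
  ⋃ x ∈ X, φ {x}

/-- `A` is a D-generator of `x`. -/
def IsDGen (φ : Set α → Set α) (x : α) (A : Set α) : Prop :=
  x ∈ φ A ∧ x ∉ binPart φ A ∧ ∀ B : Set α, binPart φ B ⊂ binPart φ A → x ∉ φ B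

/-- `A` is an E-generator of `x`: a D-generator whose closure is inclusion-minimal
among the closures of D-generators of `x`. -/
def IsEGen (φ : Set α → Set α) (x : α) (A : Set α) : Prop :=
  IsDGen φ x A ∧ ∀ B : Set α, IsDGen φ x B → φ B ⊆ φ A → φ B = φ A

/-- The E-base of the closure space: all valid nontrivial binary implications
together with the implications `A → {x}` for `A` an E-generator of `x`. -/
def EBase (φ : Set α → Set α) : Set (Set α × Set α) :=
  {p | ∃ a x : α, p = ({a}, {x}) ∧ x ∈ φ {a} ∧ x ≠ a} ∪
    {p | ∃ (x : α) (A : Set α), p = (A, {x}) ∧ IsEGen φ x A}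

/-- `Y` satisfies all implications of `S`. -/
def ImpClosedSet (S : Set (Set α × Set α)) (Y : Set α) : Prop :=
  ∀ p ∈ S, p.1 ⊆ Y → p.2 ⊆ Y

/-- The closure of `Z` under the implications in `S`: the smallest set containing
`Z` satisfying all implications of `S`. -/
def ImpClosure (S : Set (Set α × Set α)) (Z : Set α) : Set α :=
  ⋂₀ {Y : Set α | Z ⊆ Y ∧ ImpClosedSet S Y}

/-- The E-base is valid: its induced closure operator is `φ`. -/
def EBaseValid (φ : Set α → Set α) : Prop :=
  ∀ Z : Set α, ImpClosure (EBase φ) Z = φ Z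

/-- `Q` is quasi-closed. -/
def QuasiClosed (φ : Set α → Set α) (Q : Set α) : Prop :=
  ∀ X ⊆ Q, φ X ⊂ φ Q → φ X ⊆ Q

/-- `P` is pseudo-closed: non-closed and inclusion-minimal among the quasi-closed
sets spanning `φ P`. -/
def PseudoClosed (φ : Set α → Set α) (P : Set α) : Prop :=
  ¬ IsClosedSet φ P ∧ QuasiClosed φ P ∧
    ∀ Q : Set α, QuasiClosed φ Q → φ Q = φ P → Q ⊆ P → Q = P

/-- `C` is an essential closed set. -/
def Essential (φ : Set α → Set α) (C : Set α) : Prop :=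
  IsClosedSet φ C ∧ ∃ P : Set α, PseudoClosed φ P ∧ φ P = C

/-- The canonical (Duquenne–Guigues) base. -/
def DGBase (φ : Set α → Set α) : Set (Set α × Set α) :=
  {p | ∃ P : Set α, PseudoClosed φ P ∧ p = (P, φ P \ P)}

/-- `C'` is a predecessor (lower cover) of `C` in the closure lattice. -/
def Predecessor (φ : Set α → Set α) (C' C : Set α) : Prop :=
  IsClosedSet φ C' ∧ IsClosedSet φ C ∧ C' ⊂ C ∧
    ∀ C'' : Set α, IsClosedSet φ C'' → C' ⊂ C'' → C'' ⊆ C → C'' = C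

/-- The closure lattice is join-semidistributive. -/
def JoinSemidistrib (φ : Set α → Set α) : Prop :=
  ∀ C1 C2 C3 : Set α, IsClosedSet φ C1 → IsClosedSet φ C2 → IsClosedSet φ C3 →
    φ (C1 ∪ C2) = φ (C1 ∪ C3) → φ (C1 ∪ C2) = φ (C1 ∪ C2 ∩ C3)

/-- The closure lattice is meet-semidistributive. -/
def MeetSemidistrib (φ : Set α → Set α) : Prop :=
  ∀ C1 C2 C3 : Set α, IsClosedSet φ C1 → IsClosedSet φ C2 → IsClosedSet φ C3 →
    C1 ∩ C2 = C1 ∩ C3 → C1 ∩ C2 = C1 ∩ φ (C2 ∪ C3)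

/-- The closure lattice is semidistributive. -/
def Semidistrib (φ : Set α → Set α) : Prop :=
  JoinSemidistrib φ ∧ MeetSemidistrib φ

/-- The closure lattice is modular: `a ≤ b → (b ∧ c) ∨ a = b ∧ (c ∨ a)`. -/
def ModularLattice (φ : Set α → Set α) : Prop :=
  ∀ A B C : Set α, IsClosedSet φ A → IsClosedSet φ B → IsClosedSet φ C →
    A ⊆ B → φ (B ∩ C ∪ A) = B ∩ φ (C ∪ A)

/-- The closure lattice is atomistic (in a standard space). -/
def Atomistic (φ : Set α → Set α) : Prop :=
  ∀ x : α, φ {x} = ({x} : Set α)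

/-- The closure lattice is upper-semimodular. -/
def UpperSemimodular (φ : Set α → Set α) : Prop :=
  ∀ C1 C2 : Set α, IsClosedSet φ C1 → IsClosedSet φ C2 →
    Predecessor φ (C1 ∩ C2) C1 → Predecessor φ C2 (φ (C1 ∪ C2))

/-- The closure lattice is geometric: atomistic and upper-semimodular. -/
def Geometric (φ : Set α → Set α) : Prop :=
  Atomistic φ ∧ UpperSemimodular φ

/-- `x` is prime in the lattice `(↓C, ⊆)` of closed subsets of `C`. -/
def PrimeIn (φ : Set α → Set α) (C : Set α) (x : α) : Prop :=
  ∀ C1 C2 : Set α, IsClosedSet φ C1 → IsClosedSet φ C2 → C1 ⊆ C → C2 ⊆ C →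
    φ {x} ⊆ φ (C1 ∪ C2) → φ {x} ⊆ C1 ∨ φ {x} ⊆ C2

/-- `x ∈ C` is almost prime in `(↓C, ⊆)`. -/
def AlmostPrimeIn (φ : Set α → Set α) (C : Set α) (x : α) : Prop :=
  x ∈ C ∧ ¬ PrimeIn φ C x ∧
    ∀ C' : Set α, Predecessor φ C' C → x ∈ C' → PrimeIn φ C' x

/-- `A` is a `φ^b`-minimal spanning set of the closed set `C`. -/
def BMinSpanning (φ : Set α → Set α) (C A : Set α) : Prop :=
  φ A = C ∧ ∀ B : Set α, binPart φ B ⊂ binPart φ A → φ B ≠ C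

/-- `C` is join-irreducible: nonempty and whenever it is a join of two closed sets
it equals one of them. -/
def JoinIrred (φ : Set α → Set α) (C : Set α) : Prop :=
  IsClosedSet φ C ∧ C ≠ ∅ ∧
    ∀ C1 C2 : Set α, IsClosedSet φ C1 → IsClosedSet φ C2 →
      C = φ (C1 ∪ C2) → C = C1 ∨ C = C2

/-- `C` is join-irreducible: nonempty with a unique predecessor. -/
def JoinIrredUP (φ : Set α → Set α) (C : Set α) : Prop :=
  IsClosedSet φ C ∧ C ≠ ∅ ∧ ∃! C' : Set α, Predecessor φ C' C

theorem binPart_eq {φ : Set α → Set α} (h : Atomistic φ) (X : Set α) : binPart φ X = X := by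
  ext y
  simp [binPart, h _]

theorem exists_dgen [Finite α] {φ : Set α → Set α} (hat : Atomistic φ) {x : α} {X : Set α}
    (hx : x ∈ φ X) (hxX : x ∉ X) : ∃ A ⊆ X, IsDGen φ x A := by
  obtain ⟨A, hAX, hA⟩ := exists_minimal_le_of_wellFoundedLT (fun A : Set α => x ∈ φ A) X hx
  refine ⟨A, hAX, hA.prop, ?_, ?_⟩
  · rw [binPart_eq hat]; exact fun h => hxX (hAX h)
  · intro B hB hxB
    rw [binPart_eq hat, binPart_eq hat] at hB
    exact hB.2 (hA.le_of_le hxB hB.1)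

theorem closed_empty {φ : Set α → Set α} (hstd : IsStandard φ) (hat : Atomistic φ) (x : α) :
    φ ∅ = ∅ := by
  have h := hstd x
  simpa [IsClosedSet, hat x] using h

theorem exchange {φ : Set α → Set α} (hφ : IsClosureOp φ) (hstd : IsStandard φ)
    (hgeo : Geometric φ) {X : Set α} {x y : α} (hy : y ∈ φ (X ∪ {x})) (hyX : y ∉ φ X) :
    x ∈ φ (X ∪ {y}) := by
  obtain ⟨hext, hid, hmono⟩ := hφ
  obtain ⟨hat, hus⟩ := hgeo
  have hxX : x ∉ φ X := by
    intro hx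
    apply hyX
    have : X ∪ {x} ⊆ φ X := union_subset (hext X) (singleton_subset_iff.2 hx)
    have := hmono _ _ this
    rw [hid] at this
    exact this hy
  have hint : ({x} : Set α) ∩ φ X = ∅ := by
    ext z; simp; rintro rfl; exact hxX
  have hp := hus {x} (φ X) (hat x) (hid X) (by
    rw [hint]
    refine ⟨closed_empty hstd hat x, hat x, ?_, ?_⟩
    · exact ⟨empty_subset _, fun h => h (mem_singleton x)⟩
    · intro C _ hC hCx
      rcases subset_singleton_iff_eq.1 hCx with h | h
      · subst h; exact absurd hC (ssubset_irrefl _)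
      · exact h)
  have hXy : y ∈ φ (X ∪ {y}) := hext _ (Or.inr rfl)
  have hsub : X ∪ {x} ⊆ {x} ∪ φ X :=
    union_subset (fun z hz => Or.inr (hext _ hz)) subset_union_left
  have hsub2 : φ (X ∪ {y}) ⊆ φ ({x} ∪ φ X) := by
    have : X ∪ {y} ⊆ φ ({x} ∪ φ X) :=
      union_subset (fun z hz => hext _ (Or.inr (hext _ hz)))
        (singleton_subset_iff.2 (hmono _ _ hsub hy))
    have := hmono _ _ this
    rwa [hid] at this
  have heq := hp.2.2.2 (φ (X ∪ {y})) (hid _)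
    ⟨hmono _ _ subset_union_left, fun h => hyX (h hXy)⟩ hsub2
  rw [heq]
  exact hext _ (Or.inl rfl)

theorem dgen_props {φ : Set α → Set α} (hφ : IsClosureOp φ) (hat : Atomistic φ) {x a : α}
    {A : Set α} (h : IsDGen φ x A) (ha : a ∈ A) :
    x ∉ φ (A \ {a}) ∧ a ∉ φ (A \ {a}) ∧ x ∉ A := by
  obtain ⟨hext, hid, hmono⟩ := hφ
  obtain ⟨h1, h2, h3⟩ := h
  rw [binPart_eq hat] at h2
  have hx : x ∉ φ (A \ {a}) := by
    apply h3
    rw [binPart_eq hat, binPart_eq hat]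
    exact ⟨diff_subset, fun h => (h ha).2 rfl⟩
  refine ⟨hx, fun h => hx ?_, h2⟩
  have : A ⊆ φ (A \ {a}) := by
    intro z hz
    by_cases hza : z = a
    · rwa [hza]
    · exact hext _ ⟨hz, hza⟩
  have := hmono _ _ this
  rw [hid] at this
  exact this h1

/-- Every element of a circuit has the rest of the circuit as a D-generator. -/
theorem dgen_swap [Finite α] {φ : Set α → Set α} (hφ : IsClosureOp φ) (hstd : IsStandard φ)
    (hgeo : Geometric φ) {x a : α} {A : Set α} (h : IsDGen φ x A) (ha : a ∈ A) :
    ∃ B, IsDGen φ a B ∧ φ B ⊆ φ A := by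
  have hp := dgen_props hφ hgeo.1 h ha
  have hA : A \ {a} ∪ {a} = A := diff_union_of_subset (singleton_subset_iff.2 ha)
  have h1 : x ∈ φ (A \ {a} ∪ {a}) := by rw [hA]; exact h.1
  have h2 := exchange hφ hstd hgeo h1 hp.1
  have h3 : a ∉ A \ {a} ∪ {x} := by
    rintro (h | h)
    · exact h.2 rfl
    · rw [mem_singleton_iff] at h; subst h; exact hp.2.2 ha
  obtain ⟨B, hB, hBd⟩ := exists_dgen hgeo.1 h2 h3
  refine ⟨B, hBd, ?_⟩
  have : B ⊆ φ A := by
    intro z hz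
    rcases hB hz with h' | h'
    · exact hφ.1 _ h'.1
    · rw [mem_singleton_iff] at h'; subst h'; exact h.1
  have := hφ.2.2 _ _ this
  rwa [hφ.2.1] at this

/-- Elements of `C` without D-generator of closure strictly inside `C`. -/
def freeElts (φ : Set α → Set α) (C : Set α) : Set α :=
  {y | y ∈ C ∧ ∀ B, IsDGen φ y B → ¬ φ B ⊂ C}

theorem key [Finite α] {φ : Set α → Set α} (hφ : IsClosureOp φ) (hstd : IsStandard φ)
    (hgeo : Geometric φ) (hv : EBaseValid φ) {C R : Set α} (hC : φ C = C) (hRC : R ⊆ C)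
    (hR : ∀ X ⊆ R, φ X ⊂ C → φ X ⊆ R) (hsp : C ⊆ φ (R ∪ freeElts φ C)) :
    C ⊆ R ∪ freeElts φ C := by
  have hclosed : ImpClosedSet (EBase φ) (R ∪ freeElts φ C) := by
    rintro p (⟨a, x, rfl, hx, hne⟩ | ⟨y, A, rfl, hA⟩) hp
    · rw [hgeo.1 a] at hx; exact absurd hx hne
    · simp only at hp ⊢
      rw [singleton_subset_iff]
      by_contra hy
      have hAC : A ⊆ C := hp.trans (union_subset hRC (fun z hz => hz.1))
      have hAC' : φ A ⊆ C := by have := hφ.2.2 _ _ hAC; rwa [hC] at this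
      have hyC : y ∈ C := hAC' hA.1.1
      have hyF : y ∉ freeElts φ C := fun h => hy (Or.inr h)
      have : ∃ B, IsDGen φ y B ∧ φ B ⊂ C := by
        by_contra hcon
        push Not at hcon
        exact hyF ⟨hyC, hcon⟩
      obtain ⟨B, hB, hBC⟩ := this
      have hlt : φ A ⊂ C := by
        refine hAC'.ssubset_of_ne fun h => ?_
        have := hA.2 B hB (by rw [h]; exact hBC.1)
        rw [this, h] at hBC
        exact ssubset_irrefl _ hBC
      have hAR : A ⊆ R := by
        intro f hf
        rcases hp hf with h | h
        · exact h
        · obtain ⟨B', hB', hs⟩ := dgen_swap hφ hstd hgeo hA.1 hf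
          exact absurd (lt_of_le_of_lt hs hlt) (h.2 B' hB')
      exact hy (Or.inl (hR A hAR hlt hA.1.1))
  have h2 : ImpClosure (EBase φ) (R ∪ freeElts φ C) ⊆ R ∪ freeElts φ C :=
    sInter_subset_of_mem ⟨subset_rfl, hclosed⟩
  rw [hv] at h2
  exact hsp.trans h2

theorem forward [Finite α] {φ : Set α → Set α} (hφ : IsClosureOp φ) (hstd : IsStandard φ)
    (hgeo : Geometric φ) (hv : EBaseValid φ) (C1 C2 : Set α) (h1 : Essential φ C1)
    (h2 : Essential φ C2) (h12 : C1 ⊆ C2) : C1 = C2 := by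
  by_contra hne
  have hlt : C1 ⊂ C2 := h12.ssubset_of_ne hne
  have hext := hφ.1
  have hmono := hφ.2.2
  have nonclosed : ∀ P, ¬ IsClosedSet φ P → ∃ y, y ∈ φ P ∧ y ∉ P := by
    intro P hP
    by_contra hcon
    push Not at hcon
    exact hP (Subset.antisymm hcon (hext P))
  obtain ⟨hC1, P1, hP1, rfl⟩ := h1
  obtain ⟨hC2, P, hP, hPC⟩ := h2
  obtain ⟨n, hn, hnP1⟩ := nonclosed P1 hP1.1
  obtain ⟨B, hBP, hB⟩ := exists_dgen hgeo.1 hn hnP1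
  have hnF : n ∉ freeElts φ C2 := fun h => h.2 B hB (lt_of_le_of_lt (hmono _ _ hBP) hlt)
  have hnC : n ∈ C2 := h12 hn
  have hPC2 : P ⊆ C2 := hPC ▸ hext P
  have hnP : n ∈ P := by
    rcases key hφ hstd hgeo hv (R := P) hC2 hPC2
      (fun X hX hlt => hP.2.1 X hX (by rwa [hPC]))
      (by have := hmono P (P ∪ freeElts φ C2) subset_union_left; rwa [hPC] at this) hnC with h | h
    · exact h
    · exact absurd h hnF
  -- now the quasi-closed set contains all non-free elements
  obtain ⟨x, hx, hxP⟩ := nonclosed P hP.1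
  have hxC : x ∈ C2 := hPC ▸ hx
  have hxF : x ∈ freeElts φ C2 := by
    rcases key hφ hstd hgeo hv (R := P) hC2 hPC2
      (fun X hX hlt => hP.2.1 X hX (by rwa [hPC]))
      (by have := hmono P (P ∪ freeElts φ C2) subset_union_left; rwa [hPC] at this) hxC with h | h
    · exact absurd h hxP
    · exact h
  obtain ⟨A, hAP, hA⟩ := exists_dgen hgeo.1 hx hxP
  have hAC : φ A = C2 := by
    by_contra hne
    exact hxF.2 A hA (((hmono _ _ hAP).trans hPC.le).ssubset_of_ne hne)
  -- an element `a` on which `n` depends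
  obtain ⟨A', hA'A, hA'⟩ := exists_minimal_le_of_wellFoundedLT (fun A : Set α => n ∈ φ A) A
    (by rw [hAC]; exact hnC)
  have hne' : A'.Nonempty := by
    rw [nonempty_iff_ne_empty]
    rintro rfl
    have := hA'.prop
    rw [closed_empty hstd hgeo.1 x] at this
    exact this
  obtain ⟨a, ha'⟩ := hne'
  have ha : a ∈ A := hA'A ha'
  have hp := dgen_props hφ hgeo.1 hA ha
  have hnH : n ∉ φ (A \ {a}) := by
    intro hnH
    have hn' : n ∉ φ (A' \ {a}) := fun h => (hA'.le_of_le h diff_subset ha').2 rfl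
    have hA'' : A' \ {a} ∪ {a} = A' := diff_union_of_subset (singleton_subset_iff.2 ha')
    have h := exchange hφ hstd hgeo (x := a) (by rw [hA'']; exact hA'.prop) hn'
    apply hp.2.1
    have : A' \ {a} ∪ {n} ⊆ φ (A \ {a}) :=
      union_subset (fun z hz => hext _ ⟨hA'A hz.1, hz.2⟩) (singleton_subset_iff.2 hnH)
    have := hmono _ _ this
    rw [hφ.2.1] at this
    exact this h
  have hAa : A \ {a} ∪ {a} = A := diff_union_of_subset (singleton_subset_iff.2 ha)
  have hax : a ∈ φ (A \ {a} ∪ {x}) :=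
    exchange hφ hstd hgeo (by rw [hAa]; exact hA.1) hp.1
  rcases key hφ hstd hgeo hv (R := φ (A \ {a})) hC2
    (by rw [← hAC]; exact hmono _ _ diff_subset)
    (fun X hX _ => by have := hmono _ _ hX; rwa [hφ.2.1] at this)
    (by
      have hsub : A ⊆ φ (φ (A \ {a}) ∪ freeElts φ C2) := by
        intro z hz
        by_cases hza : z = a
        · rw [hza]
          refine hmono _ _ ?_ hax
          exact union_subset (fun z hz => Or.inl (hext _ hz))
            (singleton_subset_iff.2 (Or.inr hxF))
        · exact hext _ (Or.inl (hext _ ⟨hz, hza⟩))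
      have := hmono _ _ hsub
      rwa [hφ.2.1, hAC] at this) hnC with h | h
  · exact hnH h
  · exact hnF h

theorem essential_of_quasi [Finite α] {φ : Set α → Set α} (hφ : IsClosureOp φ) {Q : Set α}
    (hQ : QuasiClosed φ Q) (hnc : ¬ IsClosedSet φ Q) : Essential φ (φ Q) := by
  obtain ⟨P, hPQ, hP⟩ := exists_minimal_le_of_wellFoundedLT
    (fun P : Set α => QuasiClosed φ P ∧ φ P = φ Q) Q ⟨hQ, rfl⟩
  refine ⟨hφ.2.1 _, P, ⟨?_, hP.prop.1, ?_⟩, hP.prop.2⟩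
  · intro h
    apply hnc
    unfold IsClosedSet at h ⊢
    refine Subset.antisymm ?_ (hφ.1 Q)
    rw [← hP.prop.2, h]
    exact hPQ
  · intro R hR hRP hsub
    exact Subset.antisymm hsub (hP.le_of_le ⟨hR, hRP.trans hP.prop.2⟩ hsub)

theorem exists_essential [Finite α] {φ : Set α → Set α} (hφ : IsClosureOp φ) {Y : Set α}
    (hY : ¬ IsClosedSet φ Y) : ∃ C, Essential φ C ∧ C ⊆ φ Y := by
  obtain ⟨C, hCY, hC⟩ := exists_minimal_le_of_wellFoundedLT
    (fun C : Set α => ∃ X, φ X = C ∧ ¬ IsClosedSet φ X) (φ Y) ⟨Y, rfl, hY⟩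
  obtain ⟨X, rfl, hX⟩ := hC.prop
  refine ⟨φ X, essential_of_quasi hφ ?_ hX, hCY⟩
  intro W hW hlt
  by_cases hc : IsClosedSet φ W
  · rw [hc]; exact hW
  · exact absurd (hC.le_of_le ⟨W, rfl, hc⟩ hlt.1) hlt.2

theorem backward [Finite α] {φ : Set α → Set α} (hφ : IsClosureOp φ) (hat : Atomistic φ)
    (hinc : ∀ C1 C2 : Set α, Essential φ C1 → Essential φ C2 → C1 ⊆ C2 → C1 = C2) :
    EBaseValid φ := by
  intro Z
  have hext := hφ.1
  have hmono := hφ.2.2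
  apply Subset.antisymm
  · apply sInter_subset_of_mem
    refine ⟨hext Z, ?_⟩
    rintro p (⟨a, x, rfl, hx, hne⟩ | ⟨y, A, rfl, hA⟩) hp
    · rw [hat a] at hx; exact absurd hx hne
    · simp only at hp ⊢
      rw [singleton_subset_iff]
      have := hmono _ _ hp
      rw [hφ.2.1] at this
      exact this hA.1.1
  · apply subset_sInter
    rintro Y ⟨hZY, hY⟩
    refine (hmono _ _ hZY).trans ?_
    by_contra hcon
    obtain ⟨C, hCY, hC⟩ := exists_minimal_le_of_wellFoundedLT
      (fun C : Set α => ∃ X ⊆ Y, φ X = C ∧ ¬ φ X ⊆ Y) (φ Y) ⟨Y, subset_rfl, rfl, hcon⟩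
    obtain ⟨X, hXY, rfl, hX⟩ := hC.prop
    have hQ : φ (Y ∩ φ X) = φ X := by
      apply Subset.antisymm
      · have := hmono (Y ∩ φ X) (φ X) inter_subset_right
        rwa [hφ.2.1] at this
      · exact hmono _ _ (subset_inter hXY (hext X))
    have hess : Essential φ (φ X) := by
      rw [← hQ]
      apply essential_of_quasi hφ
      · intro W hW hlt
        rw [hQ] at hlt
        refine subset_inter ?_ hlt.1
        by_contra hWY
        exact hlt.2 (hC.le_of_le ⟨W, hW.trans inter_subset_left, rfl, hWY⟩ hlt.1)
      · intro h
        unfold IsClosedSet at h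
        apply hX
        rw [← hQ, h]
        exact inter_subset_left
    obtain ⟨x, hx, hxY⟩ := not_subset.1 hX
    obtain ⟨A, hAX, hA⟩ := exists_dgen hat hx (fun h => hxY (hXY h))
    have hE : IsEGen φ x A := by
      refine ⟨hA, fun B hB hBA => ?_⟩
      have hBnc : ¬ IsClosedSet φ B := by
        intro h
        apply hB.2.1
        rw [binPart_eq hat, ← (h : φ B = B)]
        exact hB.1
      obtain ⟨C', hC', hsub⟩ := exists_essential hφ hBnc
      have h3 := hmono _ _ hAX
      have := hinc C' (φ X) hC' hess (hsub.trans (hBA.trans h3))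
      rw [this] at hsub
      exact Subset.antisymm hBA (h3.trans hsub)
    exact hxY (hY (A, {x}) (Or.inr ⟨x, A, rfl, hE⟩) (hAX.trans hXY) rfl)

/-- For a finite standard closure space with geometric closure lattice,
the E-base is valid iff the essential closed sets are pairwise incomparable. -/
theorem statement2 {α : Type*} [Fintype α] (φ : Set α → Set α)
    (hφ : IsClosureOp φ) (hstd : IsStandard φ) (hgeo : Geometric φ) :
    EBaseValid φ ↔
      ∀ C1 C2 : Set α, Essential φ C1 → Essential φ C2 → C1 ⊆ C2 → C1 = C2 := by
  exact ⟨forward hφ hstd hgeo, backward hφ hgeo.1⟩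

end EBaseFormal
end

section
/- For every finite standard closure space (U, φ) with closure lattice (C, ⊆), there exists a finite standard closure space (T, ψ) with closure lattice (F, ⊆) such that (C, ⊆) is isomorphic to a sublattice of (F, ⊆) and the E-base of (T, ψ) is valid. -/
namespace EBaseFormal

open Set

variable {α : Type*}

section Helper

variable {τ ι : Type*}

/-- The closure operator given by the implications `P i → K i`. -/
def hop (P K : ι → Set τ) (Z : Set τ) : Set τ :=
  {t | ∀ Y : Set τ, Z ⊆ Y → (∀ i, P i ⊆ Y → K i ⊆ Y) → t ∈ Y}

theorem hop_closed {P K : ι → Set τ} {Y : Set τ} (h : ∀ i, P i ⊆ Y → K i ⊆ Y) :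
    hop P K Y = Y :=
  Set.Subset.antisymm (fun _ ht => ht Y subset_rfl h) (fun _ ht _ hY _ => hY ht)

theorem hop_imp (P K : ι → Set τ) (Z : Set τ) (i : ι) (h : P i ⊆ hop P K Z) :
    K i ⊆ hop P K Z :=
  fun _ ht Y hZ hY => hY i (fun _ hs => h hs Y hZ hY) ht

theorem hop_isClosureOp (P K : ι → Set τ) : IsClosureOp (hop P K) :=
  ⟨fun _ _ ht _ hY _ => hY ht, fun X => hop_closed (hop_imp P K X),
    fun _ _ hXY _ ht Z hZ hc => ht Z (hXY.trans hZ) hc⟩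

theorem hop_valid (P K : ι → Set τ) (h1 : ∀ i t, ¬ P i ⊆ {t})
    (h2 : ∀ i j, P i ⊆ P j ∪ K j → i = j) (h3 : ∀ i, Disjoint (P i) (K i)) :
    IsStandard (hop P K) ∧ EBaseValid (hop P K) := by
  have hcl := hop_isClosureOp P K
  have hs : ∀ t, hop P K {t} = {t} := fun t => hop_closed fun i hi => (h1 i t hi).elim
  have hb : ∀ X, binPart (hop P K) X = X := by
    intro X; simp [binPart, hs]
  have he : hop P K ∅ = ∅ :=
    hop_closed fun i hi => by
      rcases isEmpty_or_nonempty τ with h | ⟨⟨t⟩⟩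
      · intro t; exact (IsEmpty.false t).elim
      · exact (h1 i t (hi.trans (Set.empty_subset _))).elim
  have hP : ∀ i, hop P K (P i) ⊆ P i ∪ K i := by
    intro i t ht
    refine ht _ Set.subset_union_left fun j hj => ?_
    obtain rfl := h2 j i hj
    exact Set.subset_union_right
  have hsmall : ∀ i B, B ⊆ P i ∪ K i → ¬ P i ⊆ B → hop P K B = B := by
    intro i B hB hn
    refine hop_closed fun j hj => ?_
    obtain rfl := h2 j i (hj.trans hB)
    exact (hn hj).elim
  have hK : ∀ i, K i ⊆ hop P K (P i) := fun i => hop_imp P K _ i (hcl.1 _)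
  have hE : ∀ i, ∀ t ∈ K i, IsEGen (hop P K) t (P i) := by
    intro i t ht
    have htP : t ∉ P i := fun h => Set.disjoint_left.1 (h3 i) h ht
    refine ⟨⟨hK i ht, by rwa [hb], ?_⟩, ?_⟩
    · intro B hB
      rw [hb, hb] at hB
      rw [hsmall i B (hB.1.trans Set.subset_union_left) hB.2]
      exact fun h => htP (hB.1 h)
    · intro B hB hsub
      refine Set.Subset.antisymm hsub ?_
      by_cases h : P i ⊆ B
      · exact hcl.2.2 _ _ h
      · have hBc := hsmall i B (((hcl.1 B).trans hsub).trans (hP i)) h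
        have h4 := hB.1
        have h5 := hB.2.1
        rw [hb] at h5
        rw [hBc] at h4
        exact (h5 h4).elim
  refine ⟨fun t => ?_, fun Z => ?_⟩
  · rw [hs]; simpa [IsClosedSet] using he
  · apply Set.Subset.antisymm
    · refine Set.sInter_subset_of_mem ⟨hcl.1 Z, ?_⟩
      rintro p (⟨a, x, rfl, hx, hne⟩ | ⟨x, A, rfl, hA⟩) hp
      · rw [hs] at hx; exact (hne hx).elim
      · have := hcl.2.2 _ _ hp hA.1.1
        rw [hcl.2.1] at this
        simpa using this
    · intro t ht Y hY
      refine ht Y hY.1 fun i hi s hs' => ?_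
      have := hY.2 (P i, {s}) (Or.inr ⟨s, P i, rfl, hE i s hs'⟩) hi
      simpa using this

end Helper

/-- Every finite standard closure space embeds, as a sublattice of
the closure lattice, into a finite standard closure space with valid E-base. -/
theorem statement3 {α : Type*} [Fintype α] (φ : Set α → Set α)
    (hφ : IsClosureOp φ) (hstd : IsStandard φ) :
    ∃ (n : ℕ) (ψ : Set (Fin n) → Set (Fin n)),
      IsClosureOp ψ ∧ IsStandard ψ ∧ EBaseValid ψ ∧
      ∃ g : Set α → Set (Fin n),
        (∀ C : Set α, IsClosedSet φ C → IsClosedSet ψ (g C)) ∧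
        (∀ C1 C2 : Set α, IsClosedSet φ C1 → IsClosedSet φ C2 →
          (C1 ⊆ C2 ↔ g C1 ⊆ g C2)) ∧
        (∀ C1 C2 : Set α, IsClosedSet φ C1 → IsClosedSet φ C2 →
          g (C1 ∩ C2) = g C1 ∩ g C2) ∧
        (∀ C1 C2 : Set α, IsClosedSet φ C1 → IsClosedSet φ C2 →
          g (φ (C1 ∪ C2)) = ψ (g C1 ∪ g C2)) := by
  classical
  let T := α × (Set α × α × Bool) × Bool
  have : Finite T := by
    have : Finite (Set α) := inferInstance
    infer_instance
  obtain ⟨n, ⟨e'⟩⟩ := Finite.exists_equiv_fin T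
  let e : Fin n ≃ T := e'.symm
  let ι := {q : Set α × α × Bool // q.1.Nonempty ∧ q.2.1 ∈ φ q.1 ∧ q.2.1 ∉ q.1}
  let P : ι → Set (Fin n) := fun i => {t | (e t).1 ∈ i.1.1 ∧ (e t).2.1 = i.1}
  let K : ι → Set (Fin n) := fun i => {t | (e t).1 = i.1.2.1 ∧ (e t).2.2 = i.1.2.2}
  have hPm : ∀ (i : ι) (a : α) (c : Bool), a ∈ i.1.1 → e.symm (a, i.1, c) ∈ P i := by
    intro i a c ha
    simp [P, ha]
  have hv := hop_valid P K ?_ ?_ ?_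
  · let g : Set α → Set (Fin n) := fun C => {t | (e t).1 ∈ C}
    have hgc : ∀ C, IsClosedSet φ C → ∀ i, P i ⊆ g C → K i ⊆ g C := by
      intro C hC i hi t ht
      have hA : i.1.1 ⊆ C := by
        intro a ha
        have := hi (hPm i a true ha)
        simpa [g] using this
      have h1 : i.1.2.1 ∈ φ C := hφ.2.2 _ _ hA i.2.2.1
      rw [hC] at h1
      change (e t).1 ∈ C
      rw [ht.1]; exact h1
    refine ⟨n, hop P K, hop_isClosureOp P K, hv.1, hv.2, g, ?_, ?_, ?_, ?_⟩
    · intro C hC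
      exact hop_closed (hgc C hC)
    · intro C1 C2 _ _
      refine ⟨fun h t ht => h ht, fun h x hx => ?_⟩
      have : e.symm (x, (∅, x, true), true) ∈ g C1 := by simpa [g] using hx
      simpa [g] using h this
    · intro C1 C2 _ _; rfl
    · intro C1 C2 _ _
      apply Set.Subset.antisymm
      · intro t ht
        by_cases hx : (e t).1 ∈ C1 ∪ C2
        · exact (hop_isClosureOp P K).1 _ hx
        · have hne : (C1 ∪ C2).Nonempty := by
            rw [Set.nonempty_iff_ne_empty]
            intro h0
            have ht' : (e t).1 ∈ φ (C1 ∪ C2) := ht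
            rw [h0] at ht'
            have h1 := hφ.2.2 _ _ (Set.empty_subset (φ {(e t).1} \ {(e t).1})) ht'
            rw [hstd (e t).1] at h1
            exact h1.2 rfl
          let i : ι := ⟨(C1 ∪ C2, (e t).1, (e t).2.2), hne, ht, hx⟩
          refine hop_imp P K _ i ?_ (show t ∈ K i from ⟨rfl, rfl⟩)
          intro s hs
          exact (hop_isClosureOp P K).1 _ (show (e s).1 ∈ C1 ∪ C2 from hs.1)
      · intro t ht
        refine ht _ ?_ (hgc _ (hφ.2.1 _))
        rintro s (hs | hs)
        · exact hφ.1 _ (Or.inl hs)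
        · exact hφ.1 _ (Or.inr hs)
  · intro i t h
    obtain ⟨a, ha⟩ := i.2.1
    have h1 := h (hPm i a true ha)
    have h2 := h (hPm i a false ha)
    have h3 := e.symm.injective (h1.trans h2.symm)
    exact Bool.noConfusion (congrArg (fun p : T => p.2.2) h3)
  · intro i j h
    obtain ⟨a, ha⟩ := i.2.1
    have h1 := h (hPm i a true ha)
    have h2 := h (hPm i a false ha)
    rcases h1 with h1 | h1
    · apply Subtype.ext
      simpa using h1.2
    · rcases h2 with h2 | h2
      · apply Subtype.ext
        simpa using h2.2
      · have e1 := h1.2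
        have e2 := h2.2
        simp at e1 e2
        exact Bool.noConfusion (e1.symm.trans e2)
  · intro i
    rw [Set.disjoint_left]
    intro t h1 h2
    have h3 := h1.1
    rw [h2.1] at h3
    exact i.2.2.2 h3


end EBaseFormal
end

section
/- Let (U, φ) be a finite standard closure space and x ∈ U. A set A ⊆ U is an E-generator of x if and only if the following three conditions hold: (1) A is a φ^b-minimal spanning set of φ(A); (2) x ∈ φ(A) and x ∉ φ^b(A); (3) for every closed set C with C ⊊ φ(A) and x ∈ C, the element x is prime in (↓C, ⊆). -/
namespace EBaseFormal

open Set

variable {α : Type*}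

theorem aux_sing (φ : Set α → Set α) (hφ : IsClosureOp φ) {x : α} {C : Set α}
    (hC : φ C = C) : φ {x} ⊆ C ↔ x ∈ C := by
  obtain ⟨h1, h2, h3⟩ := hφ
  constructor
  · intro h
    exact h (h1 _ rfl)
  · intro h
    rw [← hC]
    exact h3 _ _ (Set.singleton_subset_iff.2 h)

theorem aux_sub (φ : Set α → Set α) (hφ : IsClosureOp φ) {X Y : Set α}
    (h : X ⊆ φ Y) : φ X ⊆ φ Y := by
  obtain ⟨h1, h2, h3⟩ := hφ
  have := h3 _ _ h
  rwa [h2] at this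

theorem aux_bin (φ : Set α → Set α) (hφ : IsClosureOp φ) (X : Set α) :
    φ (binPart φ X) = φ X := by
  apply Set.Subset.antisymm
  · apply aux_sub φ hφ
    apply Set.iUnion₂_subset
    intro a ha
    exact hφ.2.2 _ _ (Set.singleton_subset_iff.2 ha)
  · apply hφ.2.2
    intro a ha
    exact Set.mem_biUnion ha (hφ.1 _ rfl)

theorem aux_mono (φ : Set α → Set α) (hφ : IsClosureOp φ) {X Y : Set α}
    (h : binPart φ X ⊆ binPart φ Y) : φ X ⊆ φ Y := by
  rw [← aux_bin φ hφ X, ← aux_bin φ hφ Y]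
  exact hφ.2.2 _ _ h

theorem aux_empty (φ : Set α → Set α) (hφ : IsClosureOp φ) (hstd : IsStandard φ) (x : α) :
    x ∉ φ ∅ := by
  intro h
  have h2 := hφ.2.2 ∅ (φ {x} \ {x}) (Set.empty_subset _) h
  rw [hstd x] at h2
  exact h2.2 rfl

theorem aux_prime [Fintype α] (φ : Set α → Set α) (hφ : IsClosureOp φ) (hstd : IsStandard φ)
    (x : α) (B : Set α) (hp : PrimeIn φ (φ B) x) (hx : x ∈ φ B) : x ∈ binPart φ B := by
  have key : ∀ S : Set α, S.Finite → S ⊆ B → x ∈ φ S → x ∈ binPart φ S := by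
    intro S hS
    induction S, hS using Set.Finite.induction_on with
    | empty =>
      intro _ h
      exact absurd h (aux_empty φ hφ hstd x)
    | @insert a S _ _ ih =>
      intro hsub h
      have hSB : S ⊆ B := (Set.subset_insert a S).trans hsub
      have haB : ({a} : Set α) ⊆ B := Set.singleton_subset_iff.2 (hsub (Set.mem_insert a S))
      have hins : insert a S ⊆ φ {a} ∪ φ S := by
        intro y hy
        rcases hy with rfl | hy
        · exact Or.inl (hφ.1 _ rfl)
        · exact Or.inr (hφ.1 _ hy)
      have := hp (φ {a}) (φ S) (hφ.2.1 _) (hφ.2.1 _) (hφ.2.2 _ _ haB) (hφ.2.2 _ _ hSB)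
        ((aux_sing φ hφ (hφ.2.1 _)).2 (hφ.2.2 _ _ hins h))
      rw [aux_sing φ hφ (hφ.2.1 _), aux_sing φ hφ (hφ.2.1 _)] at this
      rcases this with h | h
      · exact Set.mem_biUnion (Set.mem_insert a S) h
      · exact Set.biUnion_subset_biUnion_left (Set.subset_insert a S) (ih hSB h)
  exact key B B.toFinite subset_rfl hx

theorem aux_exists [Fintype α] (φ : Set α → Set α) (x : α) (B : Set α)
    (hx : x ∈ φ B) (hb : x ∉ binPart φ B) :
    ∃ D, IsDGen φ x D ∧ binPart φ D ⊆ binPart φ B := by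
  obtain ⟨D, hD, hmin⟩ := Set.exists_min_image
    {D : Set α | x ∈ φ D ∧ binPart φ D ⊆ binPart φ B} (fun D => (binPart φ D).ncard)
    (Set.toFinite _) ⟨B, hx, subset_rfl⟩
  refine ⟨D, ⟨hD.1, fun h => hb (hD.2 h), ?_⟩, hD.2⟩
  intro E hE hxE
  have h1 := hmin E ⟨hxE, hE.subset.trans hD.2⟩
  have h2 := Set.ncard_lt_ncard hE (Set.toFinite _)
  omega

/-- characterization of E-generators. -/
theorem statement4 {α : Type*} [Fintype α] (φ : Set α → Set α)
    (hφ : IsClosureOp φ) (hstd : IsStandard φ) (x : α) (A : Set α) :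
    IsEGen φ x A ↔
      BMinSpanning φ (φ A) A ∧
      (x ∈ φ A ∧ x ∉ binPart φ A) ∧
      ∀ C : Set α, IsClosedSet φ C → C ⊂ φ A → x ∈ C → PrimeIn φ C x := by
  constructor
  · rintro ⟨⟨hx, hb, hm⟩, hmin⟩
    refine ⟨⟨rfl, fun B hB h => hm B hB (h ▸ hx)⟩, ⟨hx, hb⟩, ?_⟩
    intro C hC hCA hxC C1 C2 h1 h2 h1C h2C h
    rw [aux_sing φ hφ (hφ.2.1 _)] at h
    rw [aux_sing φ hφ h1, aux_sing φ hφ h2]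
    by_contra hn
    push Not at hn
    have hbn : x ∉ binPart φ (C1 ∪ C2) := by
      intro hxb
      obtain ⟨y, hy, hxy⟩ := Set.mem_iUnion₂.1 hxb
      rcases hy with hy | hy
      · exact hn.1 ((aux_sing φ hφ h1).2 hy hxy)
      · exact hn.2 ((aux_sing φ hφ h2).2 hy hxy)
    obtain ⟨D, hD, hDs⟩ := aux_exists φ x _ h hbn
    have hDC : φ D ⊆ C := by
      refine (aux_mono φ hφ hDs).trans ?_
      have h5 := hφ.2.2 _ _ (Set.union_subset h1C h2C)
      rwa [hC] at h5
    have hEq := hmin D hD (hDC.trans hCA.subset)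
    exact hCA.2 (hEq ▸ hDC)
  · rintro ⟨⟨_, hspan⟩, ⟨hx, hb⟩, hp⟩
    have key : ∀ B : Set α, φ B ⊆ φ A → φ B ≠ φ A → x ∈ φ B → x ∈ binPart φ B := by
      intro B hB hne hxB
      exact aux_prime φ hφ hstd x B (hp _ (hφ.2.1 _) (hB.ssubset_of_ne hne) hxB) hxB
    refine ⟨⟨hx, hb, ?_⟩, ?_⟩
    · intro B hB hxB
      exact hb (hB.subset (key B (aux_mono φ hφ hB.subset) (hspan B hB) hxB))
    · intro B hB hBA
      by_contra hne
      exact hB.2.1 (key B hBA hne hB.1)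

end EBaseFormal
end

section
/- Let (U, φ) be a finite standard closure space and x ∈ U. The family {C closed : x is not prime in (↓C, ⊆)} is a filter (an upward-closed family) of the closure lattice, and its inclusion-minimal members are exactly the closed sets of the form φ(A) with A an E-generator of x. -/
namespace EBaseFormal

open Set

variable {α : Type*}

/-- `x` is not prime below the closed set `C` iff `C` contains the closure of a D-generator. -/
theorem not_primeIn_iff {α : Type*} [Fintype α] (φ : Set α → Set α)
    (hφ : IsClosureOp φ) (hstd : IsStandard φ) (x : α) (C : Set α) (hC : IsClosedSet φ C) :
    ¬ PrimeIn φ C x ↔ ∃ A : Set α, IsDGen φ x A ∧ φ A ⊆ C := by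
  obtain ⟨hext, hidem, hmono⟩ := hφ
  have hsub : ∀ D : Set α, IsClosedSet φ D → ∀ X : Set α, X ⊆ D → φ X ⊆ D := by
    intro D hD X hX
    have h := hmono X D hX
    rwa [show φ D = D from hD] at h
  have hsing : ∀ D : Set α, IsClosedSet φ D → ∀ y : α, φ {y} ⊆ D ↔ y ∈ D := by
    intro D hD y
    exact ⟨fun h => h (hext _ rfl), fun h => hsub D hD _ (by simpa using h)⟩
  constructor
  · intro h
    unfold PrimeIn at h
    push Not at h
    obtain ⟨C1, C2, h1, h2, hs1, hs2, hx, hn1, hn2⟩ := h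
    rw [hsing _ h1] at hn1
    rw [hsing _ h2] at hn2
    rw [hsing _ (hidem _)] at hx
    have hbC : binPart φ (C1 ∪ C2) ⊆ C1 ∪ C2 := by
      intro y hy
      simp only [binPart, mem_iUnion] at hy
      obtain ⟨z, hz, hy⟩ := hy
      rcases hz with hz | hz
      · exact Or.inl ((hsing _ h1 z).2 hz hy)
      · exact Or.inr ((hsing _ h2 z).2 hz hy)
    have hwf : WellFounded (fun A B : Set α => binPart φ A ⊂ binPart φ B) :=
      InvImage.wf (binPart φ) (Finite.wellFounded_of_trans_of_irrefl
        (fun A B : Set α => A ⊂ B))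
    obtain ⟨A, ⟨hA1, hA2⟩, hmin⟩ := hwf.has_min
      {A : Set α | x ∈ φ A ∧ binPart φ A ⊆ C1 ∪ C2} ⟨C1 ∪ C2, hx, hbC⟩
    have hAb : A ⊆ binPart φ A := by
      intro y hy
      simp only [binPart, mem_iUnion]
      exact ⟨y, hy, hext _ rfl⟩
    refine ⟨A, ⟨hA1, ?_, ?_⟩, ?_⟩
    · intro hb
      rcases hA2 hb with h | h
      · exact hn1 h
      · exact hn2 h
    · intro B hB hxB
      exact hmin B ⟨hxB, hB.subset.trans hA2⟩ hB
    · exact hsub C hC _ (hAb.trans (hA2.trans (union_subset hs1 hs2)))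
  · rintro ⟨A, ⟨hA1, hA2, -⟩, hAC⟩ hp
    have hwf : WellFounded (fun A B : Set α => A ⊂ B) :=
      Finite.wellFounded_of_trans_of_irrefl _
    obtain ⟨B, ⟨hB1, hB2⟩, hmin⟩ := hwf.has_min
      {B : Set α | x ∈ φ B ∧ B ⊆ A} ⟨A, hA1, subset_rfl⟩
    have hne : B.Nonempty := by
      rw [nonempty_iff_ne_empty]
      rintro rfl
      exact (hsub _ (hstd x) ∅ (empty_subset _) hB1).2 rfl
    obtain ⟨a, ha⟩ := hne
    have hBC : B ⊆ C := hB2.trans ((hext A).trans hAC)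
    have key := hp (φ {a}) (φ (B \ {a})) (hidem _) (hidem _)
      (hsub C hC _ (by simpa using hBC ha)) (hsub C hC _ (diff_subset.trans hBC)) ?_
    · rw [hsing _ (hidem _), hsing _ (hidem _)] at key
      rcases key with k | k
      · apply hA2
        simp only [binPart, mem_iUnion]
        exact ⟨a, hB2 ha, k⟩
      · refine hmin (B \ {a}) ⟨k, diff_subset.trans hB2⟩ ⟨diff_subset, fun h => ?_⟩
        exact (h ha).2 rfl
    · rw [hsing _ (hidem _)]
      refine hmono B _ ?_ hB1
      intro y hy
      by_cases hya : y = a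
      · subst hya
        exact Or.inl (hext _ rfl)
      · exact Or.inr (hext _ ⟨hy, hya⟩)

/-- the family of closed sets in which `x` is not prime is a filter of
the closure lattice, and its inclusion-minimal members are exactly the closures of
the E-generators of `x`. -/
theorem statement5 {α : Type*} [Fintype α] (φ : Set α → Set α)
    (hφ : IsClosureOp φ) (hstd : IsStandard φ) (x : α) :
    (∀ C C' : Set α, IsClosedSet φ C → IsClosedSet φ C' → C ⊆ C' →
        ¬ PrimeIn φ C x → ¬ PrimeIn φ C' x) ∧
      {C : Set α | IsClosedSet φ C ∧ ¬ PrimeIn φ C x ∧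
          ∀ C' : Set α, IsClosedSet φ C' → ¬ PrimeIn φ C' x → C' ⊆ C → C' = C} =
        {C : Set α | ∃ A : Set α, IsEGen φ x A ∧ φ A = C} := by
  have hiff := not_primeIn_iff φ hφ hstd x
  have hcl : ∀ X, IsClosedSet φ (φ X) := hφ.2.1
  refine ⟨?_, ?_⟩
  · intro C C' hC hC' hCC h
    rw [hiff _ hC] at h
    rw [hiff _ hC']
    obtain ⟨A, hA, hAC⟩ := h
    exact ⟨A, hA, hAC.trans hCC⟩
  · ext C
    constructor
    · rintro ⟨hC, hn, hmin⟩
      obtain ⟨A, hA, hAC⟩ := (hiff C hC).1 hn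
      have hmem : ∀ B, IsDGen φ x B → φ B ⊆ C → φ B = C := fun B hB hBC =>
        hmin _ (hcl B) ((hiff _ (hcl B)).2 ⟨B, hB, subset_rfl⟩) hBC
      have hAe := hmem A hA hAC
      refine ⟨A, ⟨hA, fun B hB hBA => ?_⟩, hAe⟩
      rw [hmem B hB (hBA.trans hAC), hAe]
    · rintro ⟨A, ⟨hA, hmin⟩, rfl⟩
      refine ⟨hcl A, (hiff _ (hcl A)).2 ⟨A, hA, subset_rfl⟩, ?_⟩
      intro C' hC' hn hsub
      obtain ⟨B, hB, hBC⟩ := (hiff C' hC').1 hn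
      have := hmin B hB (hBC.trans hsub)
      exact hsub.antisymm (this ▸ hBC)

end EBaseFormal
end

section
/- Let (U, φ) be a finite standard closure space, x ∈ U, and suppose C = φ(B) for some E-generator B of x. Then every φ^b-minimal spanning set A of C satisfying x ∉ φ^b(A) is an E-generator of x. -/
namespace EBaseFormal

open Set

variable {α : Type*}

/-- if `C` is the closure of some E-generator of `x`, then every
`φ^b`-minimal spanning set `A` of `C` with `x ∉ φ^b(A)` is an E-generator of `x`. -/
theorem statement6 {α : Type*} [Fintype α] (φ : Set α → Set α)
    (hφ : IsClosureOp φ) (hstd : IsStandard φ) (x : α) (B C A : Set α)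
    (hB : IsEGen φ x B) (hC : C = φ B)
    (hA : BMinSpanning φ C A) (hx : x ∉ binPart φ A) :
    IsEGen φ x A := by
  obtain ⟨hext, hidem, hmono⟩ := hφ
  obtain ⟨hA1, hA2⟩ := hA
  obtain ⟨hBD, hBmin⟩ := hB
  -- the binary part lies inside the closure
  have hbin : ∀ X : Set α, binPart φ X ⊆ φ X := by
    intro X
    refine Set.iUnion₂_subset fun y hy => ?_
    exact hmono _ _ (Set.singleton_subset_iff.mpr hy)
  have hsub : ∀ X : Set α, X ⊆ binPart φ X := by
    intro X y hy
    exact Set.mem_biUnion hy (hext {y} rfl)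
  have hcl : ∀ X Y : Set α, binPart φ X ⊆ binPart φ Y → φ X ⊆ φ Y := by
    intro X Y h
    have h1 : φ X ⊆ φ (φ Y) := hmono _ _ ((hsub X).trans (h.trans (hbin Y)))
    rwa [hidem] at h1
  refine ⟨⟨?_, hx, ?_⟩, ?_⟩
  · rw [hA1, hC]; exact hBD.1
  · intro D hD hxD
    obtain ⟨E, hE, hEmin⟩ := (Set.toFinite {E : Set α | x ∈ φ E ∧
      binPart φ E ⊆ binPart φ D}).exists_minimalFor (binPart φ) _ ⟨D, hxD, subset_rfl⟩
    have hEA : binPart φ E ⊂ binPart φ A := lt_of_le_of_lt hE.2 hD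
    have hEgen : IsDGen φ x E := by
      refine ⟨hE.1, fun h => hx (hEA.1 h), fun F hF hxF => ?_⟩
      exact hF.2 (hEmin ⟨hxF, hF.1.trans hE.2⟩ hF.1)
    have hle : φ E ⊆ φ B := by
      rw [← hC, ← hA1]; exact hcl _ _ hEA.1
    exact hA2 E hEA ((hBmin E hEgen hle).trans hC.symm)
  · intro D hD hDA
    rw [hA1, hC] at hDA ⊢
    exact hBmin D hD hDA

end EBaseFormal
end

section
/- Let (U, φ) be a finite standard closure space, let C be a closed set, x ∈ C, and set Q = C \ {y ∈ C : x ∈ φ^b({y})}. Then Q is a quasi-closed set spanning C if and only if C = φ(A) for some E-generator A of x. -/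
namespace EBaseFormal

open Set

variable {α : Type*}

theorem binPart_mono_aux {φ : Set α → Set α} {X Y : Set α} (h : X ⊆ Y) :
    binPart φ X ⊆ binPart φ Y := by
  intro z hz
  simp only [binPart, mem_iUnion, exists_prop] at hz ⊢
  obtain ⟨y, hy, hz⟩ := hz
  exact ⟨y, h hy, hz⟩

theorem closure_sub_of_binPart {φ : Set α → Set α} (hφ : IsClosureOp φ) {A X : Set α}
    (h : binPart φ A ⊆ binPart φ X) : φ A ⊆ φ X := by
  obtain ⟨h1, h2, h3⟩ := hφ
  rw [← h2 X]
  apply h3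
  intro a ha
  have : a ∈ binPart φ X := h (by
    simp only [binPart, mem_iUnion, exists_prop]
    exact ⟨a, ha, h1 _ rfl⟩)
  simp only [binPart, mem_iUnion, exists_prop] at this
  obtain ⟨y, hy, hz⟩ := this
  exact h3 {y} X (by simpa using hy) hz

theorem exists_DGen [Finite α] {φ : Set α → Set α} (x : α) (X : Set α)
    (hx : x ∈ φ X) (hb : x ∉ binPart φ X) :
    ∃ A, IsDGen φ x A ∧ binPart φ A ⊆ binPart φ X := by
  obtain ⟨A, ⟨hA1, hA2⟩, hmin⟩ := WellFounded.has_min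
    (InvImage.wf (fun A : Set α => binPart φ A) (wellFounded_lt (α := Set α)))
    {A : Set α | x ∈ φ A ∧ binPart φ A ⊆ binPart φ X} ⟨X, hx, Subset.rfl⟩
  refine ⟨A, ⟨hA1, fun h => hb (hA2 h), fun B hB hxB => ?_⟩, hA2⟩
  exact hmin B ⟨hxB, hB.subset.trans hA2⟩ hB

/-- `Q = C \ {y : x ∈ φ^b({y})}` is a quasi-closed set spanning `C`
iff `C` is the closure of some E-generator of `x`. -/
theorem statement7 {α : Type*} [Fintype α] (φ : Set α → Set α)
    (hφ : IsClosureOp φ) (hstd : IsStandard φ)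
    (C : Set α) (hC : IsClosedSet φ C) (x : α) (hx : x ∈ C) :
    (QuasiClosed φ (C \ {y : α | x ∈ binPart φ {y}}) ∧
        φ (C \ {y : α | x ∈ binPart φ {y}}) = C) ↔
      ∃ A : Set α, IsEGen φ x A ∧ φ A = C := by
  obtain ⟨h1, h2, h3⟩ := id hφ
  have hC' : φ C = C := hC
  have hs : ∀ y, binPart φ {y} = φ {y} := fun y => by simp [binPart]
  simp only [hs]
  set Q : Set α := C \ {y : α | x ∈ φ {y}} with hQ
  have hbQ : ∀ X ⊆ Q, x ∉ binPart φ X := by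
    intro X hX h
    simp only [binPart, mem_iUnion, exists_prop] at h
    obtain ⟨y, hy, hz⟩ := h
    exact (hX hy).2 hz
  have hsub : ∀ B, IsDGen φ x B → φ B ⊆ C → B ⊆ Q := by
    intro B hB hBC b hb
    refine ⟨hBC (h1 _ hb), fun hxb => hB.2.1 ?_⟩
    simp only [binPart, mem_iUnion, exists_prop]
    exact ⟨b, hb, hxb⟩
  constructor
  · rintro ⟨hq, hsp⟩
    have key : ∀ B, IsDGen φ x B → φ B ⊆ C → φ B = C := by
      intro B hB hBC
      by_contra hne
      have hss : φ B ⊂ φ Q := by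
        rw [hsp]
        exact hBC.ssubset_of_ne hne
      exact (hq B (hsub B hB hBC) hss hB.1).2 (h1 {x} rfl)
    obtain ⟨A, hA, hAQ⟩ := exists_DGen (φ := φ) x Q (by rw [hsp]; exact hx) (hbQ Q Subset.rfl)
    have hAC := closure_sub_of_binPart hφ hAQ
    rw [hsp] at hAC
    have hAe := key A hA hAC
    refine ⟨A, ⟨hA, fun B hB hBA => ?_⟩, hAe⟩
    rw [hAe] at hBA ⊢
    exact key B hB hBA
  · rintro ⟨A, ⟨hA, hmin⟩, hAC⟩
    have hsp : φ Q = C := by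
      apply Subset.antisymm
      · conv_rhs => rw [← hC']
        exact h3 _ _ diff_subset
      · conv_lhs => rw [← hAC]
        exact h3 _ _ (hsub A hA hAC.subset)
    refine ⟨fun X hX hss y hy => ?_, hsp⟩
    rw [hsp] at hss
    refine ⟨hss.subset hy, fun hxy => ?_⟩
    have hxX : x ∈ φ X := by
      rw [← h2 X]
      exact h3 {y} _ (by simpa using hy) hxy
    obtain ⟨B, hB, hBX⟩ := exists_DGen (φ := φ) x X hxX (hbQ X hX)
    have hBX := closure_sub_of_binPart hφ hBX
    have := hmin B hB (hBX.trans (hss.subset.trans hAC.symm.subset))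
    rw [this, hAC] at hBX
    exact hss.not_subset hBX

end EBaseFormal
end

section
/- Let (U, φ) be a finite standard closure space. If A is an E-generator of some x ∈ U, then φ(A) is an essential closed set. -/
namespace EBaseFormal

open Set

variable {α : Type*}

/-- the closure of an E-generator is an essential closed set. -/
theorem statement8 {α : Type*} [Fintype α] (φ : Set α → Set α)
    (hφ : IsClosureOp φ) (hstd : IsStandard φ) (x : α) (A : Set α)
    (hA : IsEGen φ x A) :
    Essential φ (φ A) := by
  obtain ⟨hext, hidem, hmono⟩ := hφ
  obtain ⟨⟨hxA, hxnA, hAmin⟩, hE⟩ := hA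
  have hbmem : ∀ {X : Set α} {y : α}, y ∈ binPart φ X ↔ ∃ z ∈ X, y ∈ φ {z} := by
    intro X y
    simp [binPart]
  have hbsub : ∀ X : Set α, binPart φ X ⊆ φ X := by
    intro X y hy
    obtain ⟨z, hz, hyz⟩ := hbmem.1 hy
    exact hmono _ _ (Set.singleton_subset_iff.2 hz) hyz
  have hsubb : ∀ X : Set α, X ⊆ binPart φ X := fun X y hy =>
    hbmem.2 ⟨y, hy, hext _ rfl⟩
  -- every non-binary generator refines to a D-generator
  have hrefine : ∀ X : Set α, x ∈ φ X → x ∉ binPart φ X →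
      ∃ B, IsDGen φ x B ∧ φ B ⊆ φ X := by
    intro X hX hnX
    obtain ⟨T, hT⟩ := (Set.toFinite
      {T : Set α | ∃ B, T = binPart φ B ∧ x ∈ φ B ∧ binPart φ B ⊆ binPart φ X}).exists_minimal
      ⟨_, X, rfl, hX, subset_rfl⟩
    obtain ⟨⟨B, rfl, hxB, hBX⟩, hmin⟩ := hT
    refine ⟨B, ⟨hxB, fun h => hnX (hBX h), ?_⟩, ?_⟩
    · intro B' hB' hxB'
      exact hB'.2 (hmin ⟨B', rfl, hxB', hB'.1.trans hBX⟩ hB'.1)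
    · have h1 : B ⊆ φ X := (hsubb B).trans (hBX.trans (hbsub X))
      have h2 := hmono _ _ h1
      rwa [hidem] at h2
  -- the quasi-closed set
  have key : ∃ Q : Set α, QuasiClosed φ Q ∧ φ Q = φ A ∧ x ∉ Q := by
    have hQ : φ {y | y ∈ φ A ∧ x ∉ φ {y}} = φ A := by
      apply Set.Subset.antisymm
      · have h2 := hmono {y | y ∈ φ A ∧ x ∉ φ {y}} (φ A) (fun y hy => hy.1)
        rwa [hidem] at h2
      · exact hmono _ _ (fun y hy => ⟨hext _ hy, fun h => hxnA (hbmem.2 ⟨y, hy, h⟩)⟩)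
    refine ⟨{y | y ∈ φ A ∧ x ∉ φ {y}}, ?_, hQ, fun h => h.2 (hext _ rfl)⟩
    intro X hXQ hlt y hy
    rw [hQ] at hlt
    refine ⟨hlt.1 hy, fun hxy => ?_⟩
    have hxX : x ∈ φ X := by
      have h2 := hmono _ _ (Set.singleton_subset_iff.2 hy)
      rw [hidem] at h2
      exact h2 hxy
    obtain ⟨B, hB, hBX⟩ := hrefine X hxX (fun h => by
      obtain ⟨z, hz, hxz⟩ := hbmem.1 h
      exact (hXQ hz).2 hxz)
    have := hE B hB (hBX.trans hlt.1)
    exact hlt.2 (this ▸ hBX)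
  refine ⟨hidem A, ?_⟩
  obtain ⟨P, ⟨hP1, hP2, hP3⟩, hPmin⟩ := (Set.toFinite
    {Q : Set α | QuasiClosed φ Q ∧ φ Q = φ A ∧ x ∉ Q}).exists_minimal key
  refine ⟨P, ⟨fun h => ?_, hP1, ?_⟩, hP2⟩
  · have h' : φ P = P := h
    exact hP3 (h' ▸ hP2.symm ▸ hxA)
  · intro Q hQ hQP hsub
    exact hsub.antisymm (hPmin ⟨hQ, hQP.trans hP2, fun h => hP3 (hsub h)⟩ hsub)

end EBaseFormal
end

section
/- Let (U, φ) be a finite standard closure space and x ∈ U. For every closed set C of the form C = φ(B) with B an E-generator of x, there exist a pseudo-closed set P spanning C and an E-generator A of x such that A ⊆ P, x ∉ P, and φ(A) = φ(P) = C. -/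
namespace EBaseFormal

open Set

variable {α : Type*}

/-- Any set generating `x` non-binarily refines to a D-generator. -/
lemma exists_dgen_s9 {α : Type*} [Fintype α] (φ : Set α → Set α)
    (hφ : IsClosureOp φ) (x : α) (Y : Set α) (h1 : x ∈ φ Y) (h2 : x ∉ binPart φ Y) :
    ∃ A : Set α, IsDGen φ x A ∧ binPart φ A ⊆ binPart φ Y ∧ φ A ⊆ φ Y := by
  obtain ⟨hext, hid, hmono⟩ := hφ
  have hwf : WellFounded (fun A B : Set α => binPart φ A ⊂ binPart φ B) :=
    InvImage.wf (binPart φ) (wellFounded_lt (α := Set α))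
  obtain ⟨A, ⟨hA1, hA2⟩, hmin⟩ := hwf.has_min
    {A | binPart φ A ⊆ binPart φ Y ∧ x ∈ φ A} ⟨Y, subset_rfl, h1⟩
  refine ⟨A, ⟨hA2, fun h => h2 (hA1 h), fun B hB hx => hmin B ⟨hB.1.trans hA1, hx⟩ hB⟩, hA1, ?_⟩
  rw [← hid Y]
  apply hmono
  intro a ha
  have : a ∈ binPart φ Y := hA1 (mem_biUnion ha (hext {a} rfl))
  simp only [binPart, mem_iUnion] at this
  obtain ⟨y, hy, hay⟩ := this
  exact hmono {y} Y (by simpa using hy) hay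

/-- for every closed set `C` that is the closure of an E-generator of
`x`, there are a pseudo-closed set `P` spanning `C` and an E-generator `A` of `x`
with `A ⊆ P`, `x ∉ P` and `φ A = φ P = C`. -/
theorem statement9 {α : Type*} [Fintype α] (φ : Set α → Set α)
    (hφ : IsClosureOp φ) (hstd : IsStandard φ) (x : α) (B C : Set α)
    (hB : IsEGen φ x B) (hC : C = φ B) :
    ∃ P A : Set α, PseudoClosed φ P ∧ IsEGen φ x A ∧ A ⊆ P ∧ x ∉ P ∧
      φ A = C ∧ φ P = C := by
  subst hC
  have hφ' := hφ
  obtain ⟨hext, hid, hmono⟩ := hφ'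
  have hnb : ∀ (Y : Set α), (∀ y ∈ Y, x ∉ φ {y}) → x ∉ binPart φ Y := by
    intro Y hY h
    simp only [binPart, mem_iUnion] at h
    obtain ⟨y, hy, hxy⟩ := h
    exact hY y hy hxy
  let Q : Set α := {y | y ∈ φ B ∧ x ∉ φ {y}}
  have hBQ : B ⊆ Q := fun b hb =>
    ⟨hext B hb, fun h => hB.1.2.1 (mem_biUnion hb h)⟩
  have hQC : φ Q = φ B := by
    apply Subset.antisymm _ (hmono _ _ hBQ)
    rw [← hid B]
    exact hmono _ _ fun y hy => hy.1
  have hQq : QuasiClosed φ Q := by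
    intro X hX hlt y hy
    rw [hQC] at hlt
    refine ⟨hlt.1 hy, fun hxy => ?_⟩
    have hx : x ∈ φ X := by
      rw [← hid X]
      exact hmono {y} _ (by simpa using hy) hxy
    obtain ⟨A, hA, -, hAX⟩ := exists_dgen_s9 φ hφ x X hx (hnb X fun z hz => (hX hz).2)
    exact hlt.2 (hB.2 A hA (hAX.trans hlt.1) ▸ hAX)
  obtain ⟨P, ⟨hPQ, hPq, hPC⟩, hmin⟩ := (wellFounded_lt (α := Set α)).has_min
    {P | P ⊆ Q ∧ QuasiClosed φ P ∧ φ P = φ B} ⟨Q, subset_rfl, hQq, hQC⟩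
  have hxC : x ∈ φ B := hB.1.1
  have hxP : x ∉ P := fun h => (hPQ h).2 (hext {x} rfl)
  have hbP : binPart φ P ⊆ P := by
    intro z hz
    simp only [binPart, mem_iUnion] at hz
    obtain ⟨y, hy, hzy⟩ := hz
    have hs : ({y} : Set α) ⊆ P := by simpa using hy
    exact hPq {y} hs ⟨hmono _ _ hs, fun h => (hPQ hy).2 (h (hPC ▸ hxC))⟩ hzy
  obtain ⟨A, hA, hAb, hAP⟩ := exists_dgen_s9 φ hφ x P (hPC ▸ hxC) (hnb P fun y hy => (hPQ hy).2)
  have hAC : φ A = φ B := hB.2 A hA (hPC ▸ hAP)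
  refine ⟨P, A, ⟨?_, hPq, ?_⟩, ⟨hA, ?_⟩, ?_, hxP, hAC, hPC⟩
  · intro h
    unfold IsClosedSet at h
    exact hxP (h ▸ hPC ▸ hxC)
  · intro R hR hRP hsub
    by_contra hne
    exact hmin R ⟨hsub.trans hPQ, hR, hRP.trans hPC⟩ (lt_of_le_of_ne hsub hne)
  · intro D hD hDA
    rw [hAC] at hDA ⊢
    exact hB.2 D hD hDA
  · exact fun a ha => hbP (hAb (mem_biUnion ha (hext {a} rfl)))

end EBaseFormal
end

section
/- Let (U, φ) be a finite standard closure space and let Σ be any set of implications over U whose induced closure operator equals φ. Then for every x ∈ U and every closed set C of the form C = φ(B) with B an E-generator of x, Σ contains an implication (A, Y) with x ∉ A and φ(A) = C. -/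
namespace EBaseFormal

open Set

variable {α : Type*}

/-- every valid implicational base contains, for each closed set `C`
that is the closure of an E-generator of `x`, an implication `(A, Y)` with `x ∉ A`
and `φ A = C`. -/
theorem statement10 {α : Type*} [Fintype α] (φ : Set α → Set α)
    (hφ : IsClosureOp φ) (hstd : IsStandard φ)
    (S : Set (Set α × Set α)) (hS : ∀ Z : Set α, ImpClosure S Z = φ Z)
    (x : α) (B C : Set α) (hB : IsEGen φ x B) (hC : C = φ B) :
    ∃ A Y : Set α, (A, Y) ∈ S ∧ x ∉ A ∧ φ A = C := by
  obtain ⟨hext, hidem, hmono⟩ := hφ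
  obtain ⟨⟨hxB, hxbB, -⟩, hmin⟩ := hB
  subst hC
  by_contra hcon
  push Not at hcon
  have hb : ∀ X : Set α, X ⊆ binPart φ X := fun X y hy =>
    mem_iUnion₂.2 ⟨y, hy, hext {y} rfl⟩
  have hb2 : ∀ X : Set α, binPart φ X ⊆ φ X := fun X y hy => by
    obtain ⟨z, hz, hyz⟩ := mem_iUnion₂.1 hy
    exact hmono {z} X (singleton_subset_iff.2 hz) hyz
  -- every implication of `S` is valid
  have hval : ∀ A Y : Set α, (A, Y) ∈ S → Y ⊆ φ A := by
    intro A Y hAY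
    rw [← hS A]
    rintro y hy Z ⟨hZ1, hZ2⟩
    exact hZ2 _ hAY hZ1 hy
  -- D-generators exist
  have hD : ∀ A : Set α, x ∈ φ A → x ∉ binPart φ A → ∃ G, IsDGen φ x G ∧ φ G ⊆ φ A := by
    intro A hA hxA
    obtain ⟨M, ⟨G, ⟨h1, h2⟩, rfl⟩, hM⟩ :=
      (wellFounded_lt (α := Set α)).has_min
        (Set.image (binPart φ) {G | x ∈ φ G ∧ binPart φ G ⊆ binPart φ A}) ⟨_, A, ⟨hA, subset_rfl⟩, rfl⟩
    refine ⟨G, ⟨h1, fun h => hxA (h2 h), fun D hD hxD => ?_⟩, ?_⟩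
    · exact hM _ ⟨D, ⟨hxD, hD.subset.trans h2⟩, rfl⟩ hD
    · have := hmono G (φ A) ((hb G).trans (h2.trans (hb2 A)))
      rwa [hidem] at this
  have hBT : B ⊆ {y | y ∈ φ B ∧ x ∉ φ {y}} := fun y hy =>
    ⟨hext B hy, fun h => hxbB (mem_iUnion₂.2 ⟨y, hy, h⟩)⟩
  have hT : ImpClosedSet S {y | y ∈ φ B ∧ x ∉ φ {y}} := by
    rintro ⟨A, Y⟩ hAY hA y hy
    have hAB : φ A ⊆ φ B := by
      have := hmono A (φ B) (fun a ha => (hA ha).1)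
      rwa [hidem] at this
    have hyA := hval A Y hAY hy
    refine ⟨hAB hyA, fun hxy => ?_⟩
    have hxA : x ∈ φ A := by
      have := hmono {y} (φ A) (singleton_subset_iff.2 hyA) hxy
      rwa [hidem] at this
    have hxbA : x ∉ binPart φ A := fun h => by
      obtain ⟨z, hz, hxz⟩ := mem_iUnion₂.1 h
      exact (hA hz).2 hxz
    obtain ⟨G, hG, hsub⟩ := hD A hxA hxbA
    have heq := hmin G hG (hsub.trans hAB)
    exact hcon A Y hAY (fun h => hxbA (hb A h)) (hAB.antisymm (heq ▸ hsub))
  rw [← hS B] at hxB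
  exact (hxB _ ⟨hBT, hT⟩).2 (hext {x} rfl)

end EBaseFormal
end

section
/- Let (U, φ) be a finite standard closure space with modular closure lattice, and let C be a non-join-irreducible essential closed set with predecessors C_1, …, C_m and C_* = ⋂_{i=1}^m C_i. Then an element x ∈ C is almost prime in (↓C, ⊆) if and only if there exists a unique index i with C_i \ C_* = {x}. -/
namespace EBaseFormal

open Set

variable {α : Type*}

section Helpers

theorem phi_le {α : Type*} {φ : Set α → Set α} (hφ : IsClosureOp φ) {X D : Set α}
    (hD : IsClosedSet φ D) (h : X ⊆ D) : φ X ⊆ D := by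
  have := hφ.2.2 X D h
  rwa [show φ D = D from hD] at this

theorem closed_inter {α : Type*} {φ : Set α → Set α} (hφ : IsClosureOp φ) {A B : Set α}
    (hA : IsClosedSet φ A) (hB : IsClosedSet φ B) : IsClosedSet φ (A ∩ B) :=
  Subset.antisymm (subset_inter (phi_le hφ hA inter_subset_left)
    (phi_le hφ hB inter_subset_right)) (hφ.1 _)

theorem exists_pred {α : Type*} [Fintype α] {φ : Set α → Set α} {C D : Set α}
    (hC : IsClosedSet φ C) (hD : IsClosedSet φ D) (h : D ⊂ C) :
    ∃ K, Predecessor φ K C ∧ D ⊆ K := by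
  obtain ⟨K, hDK, hK⟩ := (Set.toFinite {E : Set α | IsClosedSet φ E ∧ E ⊂ C}).exists_le_maximal
    (show D ∈ {E : Set α | IsClosedSet φ E ∧ E ⊂ C} from ⟨hD, h⟩)
  refine ⟨K, ⟨hK.prop.1, hC, hK.prop.2, fun E hE hKE hEC => ?_⟩, hDK⟩
  by_contra hne
  exact hKE.2 (hK.2 (show E ∈ {E : Set α | IsClosedSet φ E ∧ E ⊂ C} from
    ⟨hE, hEC.ssubset_of_ne hne⟩) hKE.1)

theorem pred_join {α : Type*} {φ : Set α → Set α} (hφ : IsClosureOp φ) {C K D : Set α}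
    (hK : Predecessor φ K C) (hD : D ⊆ C) (h : ¬ D ⊆ K) : φ (K ∪ D) = C := by
  refine hK.2.2.2 _ (hφ.2.1 _) ⟨subset_union_left.trans (hφ.1 _), fun h' => ?_⟩
    (phi_le hφ hK.2.1 (union_subset hK.2.2.1.1 hD))
  exact h ((subset_union_right.trans (hφ.1 _)).trans h')

theorem pred_eq {α : Type*} {φ : Set α → Set α} {C K L : Set α}
    (hK : Predecessor φ K C) (hL : Predecessor φ L C) (h : K ⊆ L) : K = L := by
  by_contra hne
  have := hK.2.2.2 L hL.1 (h.ssubset_of_ne hne) hL.2.2.1.1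
  exact hL.2.2.1.ne this

theorem sing_ssubset {α : Type*} {φ : Set α → Set α} (hφ : IsClosureOp φ) (hstd : IsStandard φ)
    {C : Set α} (hC : IsClosedSet φ C) (hnji : ¬ JoinIrredUP φ C) {y : α} (hy : y ∈ C) :
    φ {y} ⊂ C := by
  refine (phi_le hφ hC (singleton_subset_iff.2 hy)).ssubset_of_ne fun h => hnji ?_
  have hY : IsClosedSet φ (C \ {y}) := h ▸ hstd y
  have hno : ∀ K, IsClosedSet φ K → K ⊂ C → y ∉ K := fun K hK hKC hyK => by
    have := phi_le hφ hK (singleton_subset_iff.2 hyK)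
    rw [h] at this
    exact hKC.2 this
  have hp : Predecessor φ (C \ {y}) C := by
    refine ⟨hY, hC, ⟨diff_subset, fun h' => (h' hy).2 rfl⟩, fun E hE h1 h2 => ?_⟩
    by_contra hne
    have hyE := hno E hE (h2.ssubset_of_ne hne)
    exact h1.2 fun z hz => ⟨h2 hz, fun hzy => hyE (hzy ▸ hz)⟩
  refine ⟨hC, ⟨y, hy⟩ |> Set.Nonempty.ne_empty, C \ {y}, hp, fun K hK => ?_⟩
  refine pred_eq hK hp fun z hz => ⟨hK.2.2.1.1 hz, fun hzy => ?_⟩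
  exact hno K hK.1 hK.2.2.1 (hzy ▸ hz)

theorem lemmaA {α : Type*} {φ : Set α → Set α} (hφ : IsClosureOp φ) (hmod : ModularLattice φ)
    {C K L D : Set α} {x : α} (hx : x ∈ C) (hK : Predecessor φ K C) (hL : Predecessor φ L C)
    (hxK : x ∉ K) (hxL : x ∈ L) (hp : PrimeIn φ L x) (hD : IsClosedSet φ D) (hDL : D ⊆ L)
    (hxD : x ∉ D) : D ⊆ K := by
  by_contra h
  have hm := hmod D L K hD hL.1 hK.1 hDL
  rw [pred_join hφ hK (hDL.trans hL.2.2.1.1) h] at hm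
  have hxm : x ∈ φ (L ∩ K ∪ D) := hm ▸ ⟨hxL, hx⟩
  have hs : x ∈ φ {x} := hφ.1 _ rfl
  rcases hp (L ∩ K) D (closed_inter hφ hL.1 hK.1) hD inter_subset_left hDL
    (phi_le hφ (hφ.2.1 _) (singleton_subset_iff.2 hxm)) with h | h
  · exact hxK (h hs).2
  · exact hxD (h hs)

/-- two preds cannot be all the preds of an essential non-join-irreducible set -/
theorem not_two {α : Type*} [Fintype α] {φ : Set α → Set α} (hφ : IsClosureOp φ)
    (hstd : IsStandard φ) (hmod : ModularLattice φ)
    {C : Set α} (hess : Essential φ C) (hnji : ¬ JoinIrredUP φ C) {K L : Set α}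
    (hK : Predecessor φ K C) (hL : Predecessor φ L C)
    (hall : ∀ M, Predecessor φ M C → M = K ∨ M = L) : False := by
  obtain ⟨hC, P, ⟨hPn, hPq, -⟩, hPC⟩ := hess
  have hPsub : P ⊆ C := hPC ▸ hφ.1 P
  have hcov : ∀ y ∈ C, y ∈ K ∨ y ∈ L := fun y hy => by
    obtain ⟨M, hM, hyM⟩ := exists_pred hC (hφ.2.1 {y}) (sing_ssubset hφ hstd hC hnji hy)
    have : y ∈ M := hyM (hφ.1 _ rfl)
    rcases hall M hM with rfl | rfl
    · exact Or.inl this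
    · exact Or.inr this
  have hcl : ∀ M, Predecessor φ M C → IsClosedSet φ (P ∩ M) := fun M hM => by
    have h1 : φ (P ∩ M) ⊆ M := phi_le hφ hM.1 inter_subset_right
    refine Subset.antisymm (subset_inter (hPq _ inter_subset_left ?_) h1) (hφ.1 _)
    rw [hPC]
    exact h1.trans_ssubset hM.2.2.1
  have key : ∀ M N, Predecessor φ M C → Predecessor φ N C →
      (∀ y ∈ C, y ∈ M ∨ y ∈ N) → M ⊆ P := fun M N hM hN hc => by
    have hm := hmod (P ∩ M) M (P ∩ N) (hcl M hM) hM.1 (hcl N hN) inter_subset_right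
    have he : P ∩ N ∪ P ∩ M = P := by
      ext y
      constructor
      · rintro (h | h)
        exacts [h.1, h.1]
      · intro h
        rcases hc y (hPsub h) with h' | h'
        exacts [Or.inr ⟨h, h'⟩, Or.inl ⟨h, h'⟩]
    rw [he, hPC, inter_eq_left.2 hM.2.2.1.1] at hm
    have : φ (M ∩ (P ∩ N) ∪ P ∩ M) ⊆ P ∩ M := phi_le hφ (hcl M hM) (by
      rintro y (h | h)
      exacts [⟨h.2.1, h.1⟩, h])
    rw [hm] at this
    exact this.trans inter_subset_left
  have h1 := key K L hK hL hcov
  have h2 := key L K hL hK fun y hy => (hcov y hy).symm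
  apply hPn
  have : P = C := Subset.antisymm hPsub fun y hy => (hcov y hy).elim (fun h => h1 h) (fun h => h2 h)
  rw [this]
  exact hC

end Helpers

/-- in a modular closure space, for a non-join-irreducible essential
set `C` with predecessor intersection `C_*`, an element `x ∈ C` is almost prime in
`(↓C, ⊆)` iff there is a unique predecessor `C'` of `C` with `C' \ C_* = {x}`. -/
theorem statement14 {α : Type*} [Fintype α] (φ : Set α → Set α)
    (hφ : IsClosureOp φ) (hstd : IsStandard φ) (hmod : ModularLattice φ)
    (C : Set α) (hess : Essential φ C) (hnji : ¬ JoinIrredUP φ C)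
    (x : α) (hx : x ∈ C) :
    AlmostPrimeIn φ C x ↔
      ∃! C' : Set α, Predecessor φ C' C ∧
        C' \ ⋂₀ {D : Set α | Predecessor φ D C} = {x} := by
  have hC := hess.1
  have hs : ∀ y, y ∈ φ {y} := fun y => hφ.1 _ rfl
  have hsub : ∀ {y : α} {D : Set α}, IsClosedSet φ D → y ∈ D → φ {y} ⊆ D :=
    fun hD hy => phi_le hφ hD (singleton_subset_iff.2 hy)
  constructor
  · rintro ⟨-, hnp, hap⟩
    -- a pred avoiding `x` above each member of a non-prime pair
    have step : ∀ D1 D2 : Set α, IsClosedSet φ D1 → IsClosedSet φ D2 → D1 ⊆ C → D2 ⊆ C →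
        φ (D1 ∪ D2) = C → x ∉ D1 → x ∉ D2 →
        ∀ K, Predecessor φ K C → D1 ⊆ K → x ∉ K := by
      intro D1 D2 h1 h2 h1C h2C hj hx1 hx2 K hK h1K hxK
      have hm := hmod D1 K D2 h1 hK.1 h2 h1K
      rw [union_comm D2 D1, hj] at hm
      have hxm : x ∈ φ (K ∩ D2 ∪ D1) := hm ▸ ⟨hxK, hx⟩
      rcases hap K hK hxK (K ∩ D2) D1 (closed_inter hφ hK.1 h2) h1 inter_subset_left h1K
        (hsub (hφ.2.1 _) hxm) with h | h
      · exact hx2 (h (hs x)).2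
      · exact hx1 (h (hs x))
    obtain ⟨C1, C2, hC1, hC2, hxC1, hxC2, hne⟩ : ∃ C1 C2, Predecessor φ C1 C ∧
        Predecessor φ C2 C ∧ x ∉ C1 ∧ x ∉ C2 ∧ C1 ≠ C2 := by
      unfold PrimeIn at hnp
      push Not at hnp
      obtain ⟨D1, D2, h1, h2, h1C, h2C, hj, hx1, hx2⟩ := hnp
      have hx1 : x ∉ D1 := fun h => hx1 (hsub h1 h)
      have hx2 : x ∉ D2 := fun h => hx2 (hsub h2 h)
      have hle : φ (D1 ∪ D2) ⊆ C := phi_le hφ hC (union_subset h1C h2C)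
      have hj' : φ (D1 ∪ D2) = C := by
        by_contra hne
        obtain ⟨K, hK, hDK⟩ := exists_pred hC (hφ.2.1 _) (hle.ssubset_of_ne hne)
        have hu := (hφ.1 _).trans hDK
        rcases hap K hK (hDK (hj (hs x))) D1 D2 h1 h2 (subset_union_left.trans hu)
          (subset_union_right.trans hu) hj with h | h
        · exact hx1 (h (hs x))
        · exact hx2 (h (hs x))
      obtain ⟨K1, hK1, hD1⟩ := exists_pred hC h1
        (h1C.ssubset_of_ne (fun h => hx1 (h ▸ hx)))
      obtain ⟨K2, hK2, hD2⟩ := exists_pred hC h2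
        (h2C.ssubset_of_ne (fun h => hx2 (h ▸ hx)))
      refine ⟨K1, K2, hK1, hK2, step D1 D2 h1 h2 h1C h2C hj' hx1 hx2 K1 hK1 hD1,
        step D2 D1 h2 h1 h2C h1C (by rwa [union_comm]) hx2 hx1 K2 hK2 hD2, ?_⟩
      rintro rfl
      have := phi_le hφ hK1.1 (union_subset hD1 hD2)
      rw [hj'] at this
      exact hK1.2.2.1.2 this
    obtain ⟨L, hL, hxL⟩ := exists_pred hC (hφ.2.1 {x}) (sing_ssubset hφ hstd hC hnji hx)
    replace hxL : x ∈ L := hxL (hs x)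
    have hA : ∀ L K D, Predecessor φ L C → x ∈ L → Predecessor φ K C → x ∉ K →
        IsClosedSet φ D → D ⊆ L → x ∉ D → D ⊆ K := fun L K D hL hxL hK hxK hD hDL hxD =>
      lemmaA hφ hmod hx hK hL hxK hxL (hap L hL hxL) hD hDL hxD
    have hE : IsClosedSet φ (C1 ∩ C2) := closed_inter hφ hC1.1 hC2.1
    have hLC : ∀ L, Predecessor φ L C → x ∈ L → L ∩ C1 ⊆ C1 ∩ C2 := fun L hL hxL =>
      subset_inter inter_subset_right (hA L C2 (L ∩ C1) hL hxL hC2 hxC2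
        (closed_inter hφ hL.1 hC1.1) inter_subset_left (fun h => hxC1 h.2))
    have hEL : ∀ L, Predecessor φ L C → x ∈ L → C1 ∩ C2 ⊆ L := by
      intro L hL hxL
      by_contra hn
      have hm := hmod (C1 ∩ C2) C1 L hE hC1.1 hL.1 inter_subset_left
      rw [pred_join hφ hL (inter_subset_left.trans hC1.2.2.1.1) hn,
        inter_eq_left.2 hC1.2.2.1.1] at hm
      have h2 : φ (C1 ∩ L ∪ C1 ∩ C2) ⊆ C1 ∩ C2 := phi_le hφ hE
        (union_subset (by rw [inter_comm]; exact hLC L hL hxL) Subset.rfl)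
      rw [hm] at h2
      exact hne (pred_eq hC1 hC2 (h2.trans inter_subset_right))
    have huniq : ∀ L', Predecessor φ L' C → x ∈ L' → L' = L := by
      intro L' hL' hxL'
      have hI := closed_inter hφ hL.1 hL'.1
      have hm := hmod (L ∩ L') L C1 hI hL.1 hC1.1 inter_subset_left
      rw [pred_join hφ hC1 (inter_subset_left.trans hL.2.2.1.1) (fun h => hxC1 (h ⟨hxL, hxL'⟩)),
        inter_eq_left.2 hL.2.2.1.1] at hm
      have h2 : φ (L ∩ C1 ∪ L ∩ L') ⊆ L ∩ L' := phi_le hφ hI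
        (union_subset ((hLC L hL hxL).trans (subset_inter (hEL L hL hxL) (hEL L' hL' hxL')))
          Subset.rfl)
      rw [hm] at h2
      exact (pred_eq hL hL' (h2.trans inter_subset_right)).symm
    refine ⟨L, ⟨hL, ?_⟩, ?_⟩
    · apply Subset.antisymm
      · rintro y ⟨hyL, hy⟩
        by_contra hyx
        rw [mem_sInter] at hy
        push Not at hy
        obtain ⟨K, hK, hyK⟩ := hy
        have hK : Predecessor φ K C := hK
        have hxK : x ∉ K := fun h => hyK (by rw [huniq K hK h]; exact hyL)
        have hxy : x ∈ φ {y} := by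
          by_contra hn
          exact hyK (hA L K (φ {y}) hL hxL hK hxK (hφ.2.1 _) (hsub hL.1 hyL) hn (hs y))
        have hyC := hsub hC (hL.2.2.1.1 hyL)
        have hm := hmod (φ {y} \ {y}) (φ {y}) K (hstd y) (hφ.2.1 _) hK.1 diff_subset
        rw [pred_join hφ hK (diff_subset.trans hyC)
          (fun h => hxK (h ⟨hxy, fun h' => hyx h'.symm⟩)), inter_eq_left.2 hyC] at hm
        have h2 : φ (φ {y} ∩ K ∪ φ {y} \ {y}) ⊆ φ {y} \ {y} := phi_le hφ (hstd y)
          (union_subset (fun z hz => ⟨hz.1, fun h => hyK (by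
            have : z = y := h
            exact this ▸ hz.2)⟩) Subset.rfl)
        rw [hm] at h2
        exact (h2 (hs y)).2 rfl
      · rintro _ rfl
        exact ⟨hxL, fun h => hxC1 (mem_sInter.1 h C1 hC1)⟩
    · rintro L' ⟨hL', he⟩
      have : x ∈ L' \ ⋂₀ {D : Set α | Predecessor φ D C} := by rw [he]; rfl
      exact huniq L' hL' this.1
  · rintro ⟨L, ⟨hL, he⟩, -⟩
    have hxL : x ∈ L \ ⋂₀ {D : Set α | Predecessor φ D C} := by rw [he]; rfl
    have hmem : ∀ y ∈ L, y ≠ x → ∀ K, Predecessor φ K C → y ∈ K := by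
      intro y hy hyx K hK
      by_contra hn
      have : y ∈ L \ ⋂₀ {D : Set α | Predecessor φ D C} :=
        ⟨hy, fun h => hn (mem_sInter.1 h K hK)⟩
      rw [he] at this
      exact hyx this
    have huniq : ∀ K, Predecessor φ K C → x ∈ K → K = L := by
      intro K hK hxK
      refine (pred_eq hL hK fun y hy => ?_).symm
      by_cases hyx : y = x
      · exact hyx ▸ hxK
      · exact hmem y hy hyx K hK
    refine ⟨hx, fun hp => ?_, ?_⟩
    · obtain ⟨K1, hK1, hne1⟩ : ∃ K, Predecessor φ K C ∧ K ≠ L := by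
        by_contra hn
        push Not at hn
        exact hnji ⟨hC, Set.Nonempty.ne_empty ⟨x, hx⟩, L, hL, hn⟩
      obtain ⟨K2, hK2, hne2, hne3⟩ : ∃ K, Predecessor φ K C ∧ K ≠ L ∧ K ≠ K1 := by
        by_contra hn
        push Not at hn
        exact not_two hφ hstd hmod hess hnji hL hK1 fun M hM => or_iff_not_imp_left.2 (hn M hM)
      have hj := pred_join hφ hK1 hK2.2.2.1.1 (fun h => hne3 (pred_eq hK2 hK1 h))
      rcases hp K1 K2 hK1.1 hK2.1 hK1.2.2.1.1 hK2.2.2.1.1 (by rw [hj]; exact hsub hC hx)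
        with h | h
      · exact hne1 (huniq K1 hK1 (h (hs x)))
      · exact hne2 (huniq K2 hK2 (h (hs x)))
    · intro K hK hxK
      rw [huniq K hK hxK]
      intro D1 D2 h1 h2 h1L h2L hj
      by_contra hn
      push Not at hn
      have hx1 : x ∉ D1 := fun h => hn.1 (hsub h1 h)
      have hx2 : x ∉ D2 := fun h => hn.2 (hsub h2 h)
      apply hxL.2
      refine mem_sInter.2 fun M hM => ?_
      have hM : Predecessor φ M C := hM
      refine phi_le hφ hM.1 (union_subset ?_ ?_) (hj (hs x))
      · exact fun y hy => hmem y (h1L hy) (fun h => hx1 (h ▸ hy)) M hM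
      · exact fun y hy => hmem y (h2L hy) (fun h => hx2 (h ▸ hy)) M hM

end EBaseFormal
end

section
/- Let (U, φ) be a finite standard closure space with modular closure lattice, and let C be a non-join-irreducible essential closed set with predecessors C_1, …, C_m and C_* = ⋂_{i=1}^m C_i. Then for every quasi-closed set Q spanning C, the closure of Q under the E-base equals Q ∪ {x ∈ C : C_i \ C_* = {x} for some i}. -/
namespace EBaseFormal

open Set

variable {α : Type*}

theorem aux_le {φ : Set α → Set α} (h : IsClosureOp φ) {X D : Set α}
    (hD : IsClosedSet φ D) (hX : X ⊆ D) : φ X ⊆ D := by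
  have := h.2.2 X D hX
  rwa [hD] at this

theorem aux_pt {φ : Set α → Set α} (h : IsClosureOp φ) (x : α) : x ∈ φ {x} :=
  h.1 _ rfl

theorem aux_cl {φ : Set α → Set α} (h : IsClosureOp φ) (X : Set α) : IsClosedSet φ (φ X) :=
  h.2.1 X

theorem aux_inter {φ : Set α → Set α} (h : IsClosureOp φ) {S : Set (Set α)}
    (hS : ∀ D ∈ S, IsClosedSet φ D) : IsClosedSet φ (⋂₀ S) := by
  apply Subset.antisymm _ (h.1 _)
  apply subset_sInter
  intro D hD
  exact aux_le h (hS D hD) (sInter_subset_of_mem hD)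

theorem aux_empty_s15 {φ : Set α → Set α} (h : IsClosureOp φ) (hs : IsStandard φ) :
    IsClosedSet φ ∅ := by
  apply Subset.antisymm _ (h.1 _)
  intro z hz
  exact absurd rfl (aux_le h (hs z) (empty_subset _) hz).2

/-- Two distinct covers: joining a predecessor with anything outside gives the top. -/
theorem aux_join {φ : Set α → Set α} (h : IsClosureOp φ) {H C X : Set α}
    (hH : Predecessor φ H C) (hX : X ⊆ C) (hn : ¬ X ⊆ H) : φ (H ∪ X) = C := by
  apply hH.2.2.2 _ (aux_cl h _)
  · refine ⟨subset_union_left.trans (h.1 _), fun hc => hn ?_⟩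
    exact (subset_union_right.trans (h.1 _)).trans hc
  · exact aux_le h hH.2.1 (union_subset hH.2.2.1.1 hX)

theorem aux_exists_pred [Fintype α] {φ : Set α → Set α} {C D : Set α}
    (hC : IsClosedSet φ C) (hD : IsClosedSet φ D) (hDC : D ⊂ C) :
    ∃ H, Predecessor φ H C ∧ D ⊆ H := by
  obtain ⟨H, hDH, hH⟩ := (Set.toFinite {E : Set α | IsClosedSet φ E ∧ E ⊂ C}).exists_le_maximal
    (a := D) ⟨hD, hDC⟩
  refine ⟨H, ⟨hH.1.1, hC, hH.1.2, ?_⟩, hDH⟩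
  intro E hE hHE hEC
  by_contra hne
  exact hHE.2 (hH.2 ⟨hE, hEC.ssubset_of_ne hne⟩ hHE.1)

theorem aux_nji {φ : Set α → Set α} (h : IsClosureOp φ) (hs : IsStandard φ) {C : Set α}
    (hC : IsClosedSet φ C) (hnji : ¬ JoinIrredUP φ C) (q : α) : φ {q} ≠ C := by
  intro e
  apply hnji
  have hq : q ∈ C := e ▸ aux_pt h q
  have hcl : IsClosedSet φ (C \ {q}) := e ▸ hs q
  have key : ∀ D, IsClosedSet φ D → D ⊂ C → D ⊆ C \ {q} := by
    intro D hD hDC z hz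
    refine ⟨hDC.1 hz, ?_⟩
    rintro rfl
    apply hDC.2
    rw [← e]
    exact aux_le h hD (by simpa using hz)
  have hss : C \ {q} ⊂ C := ⟨diff_subset, fun hc => (hc hq).2 rfl⟩
  refine ⟨hC, ⟨q, hq⟩ |> Set.Nonempty.ne_empty, C \ {q}, ⟨hcl, hC, hss, ?_⟩, ?_⟩
  · intro E hE h1 h2
    by_contra hne
    exact h1.2 (key E hE (h2.ssubset_of_ne hne))
  · intro D hD
    by_contra hne
    have := hD.2.2.2 _ hcl ((key D hD.1 hD.2.2.1).ssubset_of_ne hne) diff_subset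
    exact hss.ne this

theorem aux_lower {φ : Set α → Set α} (h : IsClosureOp φ) (hs : IsStandard φ)
    (hm : ModularLattice φ) {C H : Set α} (hH : Predecessor φ H C) {p : α} (hp : p ∈ C) :
    φ {p} \ {p} ⊆ H := by
  have hpC : φ {p} ⊆ C := aux_le h hH.2.1 (by simpa using hp)
  by_cases hpH : p ∈ H
  · exact diff_subset.trans (aux_le h hH.1 (by simpa using hpH))
  by_contra hn
  have e := hm (φ {p} \ {p}) (φ {p}) H (hs p) (aux_cl h _) hH.1 diff_subset
  rw [aux_join h hH (diff_subset.trans hpC) hn] at e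
  have h1 : φ {p} ∩ H ∪ φ {p} \ {p} ⊆ φ {p} \ {p} := by
    apply union_subset _ Subset.rfl
    rintro z ⟨hz, hzH⟩
    exact ⟨hz, fun hzp => hpH (hzp ▸ hzH)⟩
  have h2 : p ∈ φ {p} ∩ C := ⟨aux_pt h p, hp⟩
  rw [← e] at h2
  exact (aux_le h (hs p) h1 h2).2 rfl

theorem aux_cover {φ : Set α → Set α} (h : IsClosureOp φ)
    (hm : ModularLattice φ) {G D : Set α} {p : α} (hG : IsClosedSet φ G) (hD : IsClosedSet φ D)
    (hp : φ {p} \ {p} ⊆ G) (hGD : G ⊂ D) (hDp : D ⊆ φ (G ∪ {p})) : D = φ (G ∪ {p}) := by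
  apply Subset.antisymm hDp
  by_cases hpD : p ∈ D
  · exact aux_le h hD (union_subset hGD.1 (by simpa using hpD))
  exfalso
  have e := hm G D (φ {p}) hG hD (aux_cl h _) hGD.1
  have h1 : D ∩ φ {p} ∪ G ⊆ G := by
    apply union_subset _ Subset.rfl
    rintro z ⟨hz, hzp⟩
    exact hp ⟨hzp, fun hc => hpD (hc ▸ hz)⟩
  have h2 : D ⊆ D ∩ φ (φ {p} ∪ G) := by
    refine subset_inter Subset.rfl (hDp.trans (h.2.2 _ _ ?_))
    rw [union_comm]
    exact union_subset_union_left _ (h.1 _)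
  rw [← e] at h2
  exact hGD.2 (h2.trans (aux_le h hG h1))

theorem aux_dgen [Fintype α] {φ : Set α → Set α} (h : IsClosureOp φ) {T : Set α} {x : α}
    (hT : ∀ t ∈ T, φ {t} ⊆ T) (hx : x ∉ T) (hxT : x ∈ φ T) :
    ∃ B ⊆ T, IsDGen φ x B := by
  obtain ⟨B, hB⟩ := (Set.toFinite {B : Set α | B ⊆ T ∧ x ∈ φ B}).exists_minimalFor
    (binPart φ) _ ⟨T, Subset.rfl, hxT⟩
  have hbT : binPart φ B ⊆ T := iUnion₂_subset fun b hb => hT b (hB.1.1 hb)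
  refine ⟨B, hB.1.1, hB.1.2, fun hc => hx (hbT hc), ?_⟩
  intro B' hB' hxB'
  have hsub : B' ⊆ binPart φ B' := fun b hb => mem_iUnion₂.2 ⟨b, hb, aux_pt h b⟩
  exact hB'.2 (hB.2 ⟨(hsub.trans hB'.1).trans hbT, hxB'⟩ hB'.1)

theorem aux_qpt {φ : Set α → Set α} (h : IsClosureOp φ) (hs : IsStandard φ) {C Q : Set α}
    (hC : IsClosedSet φ C) (hnji : ¬ JoinIrredUP φ C) (hQ : QuasiClosed φ Q) (hQC : φ Q = C)
    {q : α} (hq : q ∈ Q) : φ {q} ⊆ Q := by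
  have hsub : ({q} : Set α) ⊆ Q := by simpa using hq
  apply hQ _ hsub
  exact (h.2.2 _ _ hsub).ssubset_of_ne (by rw [hQC]; exact aux_nji h hs hC hnji q)

theorem aux_qpred [Fintype α] {φ : Set α → Set α} (h : IsClosureOp φ) (hs : IsStandard φ)
    (hm : ModularLattice φ) {C Q : Set α}
    (hC : IsClosedSet φ C) (hnji : ¬ JoinIrredUP φ C) (hQ : QuasiClosed φ Q) (hQC : φ Q = C)
    (hne : ¬ C ⊆ Q) {D : Set α} (hD : IsClosedSet φ D) (hDQ : D ⊆ Q) :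
    ∃ H, Predecessor φ H C ∧ D ⊆ H ∧ H ⊆ Q := by
  obtain ⟨F, hDF, hF⟩ := (Set.toFinite {E : Set α | IsClosedSet φ E ∧ E ⊆ Q}).exists_le_maximal
    (a := D) ⟨hD, hDQ⟩
  have hQC' : Q ⊆ C := hQC ▸ h.1 Q
  have hFC : F ⊂ C := ⟨hF.1.2.trans hQC', fun hc => hne (hc.trans hF.1.2)⟩
  have hnQF : ¬ Q ⊆ F := fun hc => hFC.2 (hQC ▸ aux_le h hF.1.1 hc)
  obtain ⟨q0, hq0, hq0F⟩ := not_subset.1 hnQF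
  obtain ⟨q, hq⟩ := (Set.toFinite (Q \ F)).exists_minimalFor (fun q => φ {q}) _ ⟨q0, hq0, hq0F⟩
  have hqF : φ {q} \ {q} ⊆ F := by
    intro z hz
    by_contra hzF
    have hzs : φ {z} ⊆ φ {q} \ {q} := aux_le h (hs q) (by simpa using hz)
    have := hq.2 ⟨aux_qpt h hs hC hnji hQ hQC hq.1.1 hz.1, hzF⟩ (hzs.trans diff_subset)
    exact (hzs (this (aux_pt h q))).2 rfl
  have hsub : F ∪ {q} ⊆ Q := union_subset hF.1.2 (by simpa using hq.1.1)
  have hFq : φ (F ∪ {q}) = C := by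
    by_contra hc
    have h1 : φ (F ∪ {q}) ⊆ Q :=
      hQ _ hsub ((h.2.2 _ _ hsub).ssubset_of_ne (by rwa [hQC]))
    have h2 := hF.2 ⟨aux_cl h _, h1⟩ (subset_union_left.trans (h.1 _))
    exact hq.1.2 (h2 (h.1 _ (Or.inr rfl)))
  refine ⟨F, ⟨hF.1.1, hC, hFC, ?_⟩, hDF, hF.1.2⟩
  intro E hE h1 h2
  rw [← hFq]
  exact aux_cover h hm hF.1.1 hE hqF h1 (by rwa [hFq])

/-- For `x ∈ C \ Q`: `C_* ⊆ Q` and `C_* ∨ x` is a predecessor of `C`. -/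
theorem aux_main [Fintype α] {φ : Set α → Set α} (h : IsClosureOp φ) (hs : IsStandard φ)
    (hm : ModularLattice φ) {C Q : Set α}
    (hC : IsClosedSet φ C) (hnji : ¬ JoinIrredUP φ C) (hQ : QuasiClosed φ Q) (hQC : φ Q = C)
    {x : α} (hxC : x ∈ C) (hxQ : x ∉ Q) :
    ⋂₀ {D : Set α | Predecessor φ D C} ⊆ Q ∧
      Predecessor φ (φ (⋂₀ {D : Set α | Predecessor φ D C} ∪ {x})) C := by
  have hne : ¬ C ⊆ Q := fun hc => hxQ (hc hxC)
  have hQC' : Q ⊆ C := hQC ▸ h.1 Q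
  obtain ⟨H2, hH2, -, hH2Q⟩ := aux_qpred h hs hm hC hnji hQ hQC hne (aux_empty_s15 h hs)
    (empty_subset _)
  have hnQ : ¬ Q ⊆ H2 := fun hc => hH2.2.2.1.2 (hQC ▸ aux_le h hH2.1 hc)
  obtain ⟨r, hrQ, hrH2⟩ := not_subset.1 hnQ
  obtain ⟨H1, hH1, hrH1, hH1Q⟩ := aux_qpred h hs hm hC hnji hQ hQC hne (aux_cl h {r})
    (aux_qpt h hs hC hnji hQ hQC hrQ)
  replace hrH1 : r ∈ H1 := hrH1 (aux_pt h r)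
  set G := ⋂₀ {D : Set α | Predecessor φ D C} with hGdef
  have hG1 : G ⊆ H1 := sInter_subset_of_mem hH1
  have hG2 : G ⊆ H2 := sInter_subset_of_mem hH2
  have hGcl : IsClosedSet φ G := aux_inter h fun D hD => hD.1
  have hlow : ∀ p ∈ C, φ {p} \ {p} ⊆ G := fun p hp =>
    subset_sInter fun D hD => aux_lower h hs hm hD hp
  have hrC := hQC' hrQ
  have hxr : φ {x, r} = C := by
    by_contra hc
    have hsubC : φ {x, r} ⊆ C := aux_le h hC (by
      rintro z (rfl | rfl)
      · exact hxC
      · exact hrC)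
    have e := hm (φ {x, r} ∩ H1) (φ {x, r}) H2 ((by
      apply Subset.antisymm _ (h.1 _)
      exact subset_inter (aux_le h (aux_cl h _) inter_subset_left)
        (aux_le h hH1.1 inter_subset_right))) (aux_cl h _) hH2.1 inter_subset_left
    rw [aux_join h hH2 (inter_subset_left.trans hsubC)
      (fun hc => hrH2 (hc ⟨h.1 _ (Or.inr rfl), hrH1⟩)), inter_eq_left.2 hsubC] at e
    have hXQ : φ {x, r} ∩ H2 ∪ φ {x, r} ∩ H1 ⊆ Q :=
      union_subset (inter_subset_right.trans hH2Q) (inter_subset_right.trans hH1Q)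
    have h1 := hQ _ hXQ (by
      rw [e, hQC]
      exact hsubC.ssubset_of_ne hc)
    rw [e] at h1
    exact hxQ (h1 (h.1 _ (Or.inl rfl)))
  have hKC : φ (G ∪ {x}) ⊆ C :=
    aux_le h hC (union_subset (hG1.trans hH1.2.2.1.1) (by simpa using hxC))
  have hKr : φ (φ (G ∪ {x}) ∪ {r}) = C := by
    apply Subset.antisymm (aux_le h hC (union_subset hKC (by simpa using hrC)))
    rw [← hxr]
    apply h.2.2
    rintro z (rfl | rfl)
    · exact Or.inl (h.1 _ (Or.inr rfl))
    · exact Or.inr rfl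
  have hKne : φ (G ∪ {x}) ≠ C := by
    intro e
    have := aux_cover h hm hGcl hH1.1 (hlow x hxC) ⟨hG1, fun hc => hrH2 (hG2 (hc hrH1))⟩
      (by rw [e]; exact hH1.2.2.1.1)
    rw [e] at this
    exact hH1.2.2.1.ne this
  refine ⟨hG1.trans hH1Q, aux_cl h _, hC, hKC.ssubset_of_ne hKne, ?_⟩
  intro E hE h1 h2
  rw [← hKr]
  exact aux_cover h hm (aux_cl h _) hE
    ((hlow r hrC).trans (subset_union_left.trans (h.1 _))) h1 (by rwa [hKr])

/-- in a modular closure space, for a non-join-irreducible essential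
set `C` and any quasi-closed set `Q` spanning `C`, the closure of `Q` under the
E-base equals `Q ∪ {x ∈ C : C' \ C_* = {x} for some predecessor C' of C}`. -/
theorem statement15 {α : Type*} [Fintype α] (φ : Set α → Set α)
    (hφ : IsClosureOp φ) (hstd : IsStandard φ) (hmod : ModularLattice φ)
    (C : Set α) (hess : Essential φ C) (hnji : ¬ JoinIrredUP φ C)
    (Q : Set α) (hQ : QuasiClosed φ Q) (hQC : φ Q = C) :
    ImpClosure (EBase φ) Q =
      Q ∪ {x : α | x ∈ C ∧ ∃ C' : Set α, Predecessor φ C' C ∧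
        C' \ ⋂₀ {D : Set α | Predecessor φ D C} = {x}} := by
  have hC := hess.1
  have hQsub : Q ⊆ C := hQC ▸ hφ.1 Q
  have hlow : ∀ p ∈ C, φ {p} \ {p} ⊆ ⋂₀ {D : Set α | Predecessor φ D C} := fun p hp =>
    subset_sInter fun D hD => aux_lower hφ hstd hmod hD hp
  have hmain := fun {x : α} (hx : x ∈ C) (hxQ : x ∉ Q) =>
    aux_main hφ hstd hmod hC hnji hQ hQC hx hxQ
  have hGcl : IsClosedSet φ (⋂₀ {D : Set α | Predecessor φ D C}) :=
    aux_inter hφ fun D hD => hD.1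
  have hGle : ∀ D, Predecessor φ D C → ⋂₀ {D : Set α | Predecessor φ D C} ⊆ D :=
    fun D hD => sInter_subset_of_mem hD
  generalize hGdef : ⋂₀ {D : Set α | Predecessor φ D C} = G at *
  have huniq : ∀ K L x, Predecessor φ K C → Predecessor φ L C → K ⊆ L → x ∈ L → x ∈ K := by
    intro K L x hK hL hKL hx
    by_contra hxK
    exact hL.2.2.1.ne (hK.2.2.2 L hL.1 ⟨hKL, fun hc => hxK (hc hx)⟩ hL.2.2.1.1)
  apply Subset.antisymm
  · apply sInter_subset_of_mem
    refine ⟨subset_union_left, ?_⟩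
    rintro p (⟨a, x, rfl, hxa, hne⟩ | ⟨x, A, rfl, hA⟩) hpY
    · simp only [singleton_subset_iff] at hpY ⊢
      by_cases haQ : a ∈ Q
      · exact Or.inl (aux_qpt hφ hstd hC hnji hQ hQC haQ hxa)
      rcases hpY with haQ' | ⟨haC, -⟩
      · exact absurd haQ' haQ
      exact Or.inl ((hmain haC haQ).1 (hlow a haC ⟨hxa, hne⟩))
    · simp only [singleton_subset_iff] at hpY ⊢
      by_contra hxY
      have hxQ : x ∉ Q := fun hc => hxY (Or.inl hc)
      have hAC : φ A ⊆ C := aux_le hφ hC (hpY.trans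
        (union_subset hQsub fun z hz => hz.1))
      have hxC : x ∈ C := hAC hA.1.1
      obtain ⟨hGQ, hK⟩ := hmain hxC hxQ
      have hxK : x ∈ φ (G ∪ {x}) := hφ.1 _ (Or.inr rfl)
      have hGK : G ⊆ φ (G ∪ {x}) := hGle _ hK
      have hxG : x ∉ G := fun hc => hxQ (hGQ hc)
      have hgen : ∀ y ∈ φ (G ∪ {x}), y ∉ G → φ (G ∪ {y}) = φ (G ∪ {x}) := by
        intro y hy hyG
        apply aux_cover hφ hmod hGcl (aux_cl hφ _) (hlow x hxC)
        · exact ⟨subset_union_left.trans (hφ.1 _), fun hc => hyG (hc (hφ.1 _ (Or.inr rfl)))⟩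
        · exact aux_le hφ (aux_cl hφ _) (union_subset hGK (by simpa using hy))
      have hyex : ∃ y ∈ φ (G ∪ {x}), y ∉ G ∧ y ≠ x := by
        by_contra! hcon
        apply hxY
        refine Or.inr ⟨hxC, _, hK, Subset.antisymm ?_ ?_⟩
        · intro z hz
          exact hcon z hz.1 hz.2
        · rintro z rfl
          exact ⟨hxK, hxG⟩
      obtain ⟨y, hyK, hyG, hyx⟩ := hyex
      have hAeq : φ A = C := by
        by_contra hc
        obtain ⟨L, hL, hAL⟩ := aux_exists_pred hC (aux_cl hφ A) (hAC.ssubset_of_ne hc)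
        have hKL : φ (G ∪ {x}) ⊆ L := aux_le hφ hL.1
          (union_subset (hGle _ hL) (by simpa using hAL hA.1.1))
        have hAG : A ⊆ G := by
          intro a ha
          by_contra haG
          have haK : a ∈ φ (G ∪ {x}) := huniq _ _ _ hK hL hKL (hAL (hφ.1 _ ha))
          have hag := hgen a haK haG
          rcases hpY ha with haQ | ⟨haC, C', hC', hC'a⟩
          · obtain ⟨H, hH, haH, hHQ⟩ := aux_qpred hφ hstd hmod hC hnji hQ hQC
              (fun hc => hxQ (hc hxC)) (aux_cl hφ {a}) (aux_qpt hφ hstd hC hnji hQ hQC haQ)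
            have : φ (G ∪ {a}) ⊆ H := aux_le hφ hH.1 (union_subset (hGle _ hH)
              (by simpa using haH (aux_pt hφ a)))
            rw [hag] at this
            exact hxQ (hHQ (this hxK))
          · have haC' : a ∈ C' := by
              have : a ∈ C' \ G := by rw [hC'a]; rfl
              exact this.1
            have : φ (G ∪ {a}) ⊆ C' := aux_le hφ hC'.1 (union_subset (hGle _ hC')
              (by simpa using haC'))
            rw [hag] at this
            have h1 : x ∈ C' \ G := ⟨this hxK, hxG⟩
            have h2 : y ∈ C' \ G := ⟨this hyK, hyG⟩
            rw [hC'a] at h1 h2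
            exact hyx (h2.trans h1.symm)
        exact hxG (aux_le hφ hGcl hAG hA.1.1)
      have hyC : y ∈ C := hK.2.2.1.1 hyK
      obtain ⟨B, hBT, hB⟩ := aux_dgen hφ (T := G ∪ {y}) (x := x) (by
        rintro t (ht | rfl)
        · exact (aux_le hφ hGcl (by simpa using ht)).trans subset_union_left
        · intro z hz
          by_cases hzt : z = t
          · exact Or.inr hzt
          · exact Or.inl (hlow t hyC ⟨hz, hzt⟩)) (by
        rintro (hc | hc)
        · exact hxG hc
        · exact hyx hc.symm) (by rw [hgen y hyK hyG]; exact hxK)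
      have hBK : φ B ⊆ φ (G ∪ {x}) := by
        rw [← hgen y hyK hyG]
        exact hφ.2.2 _ _ hBT
      have := hA.2 B hB (by rw [hAeq]; exact hBK.trans hK.2.2.1.1)
      rw [hAeq] at this
      exact hK.2.2.1.2 (this ▸ hBK)
  · rintro x hx Y ⟨hQY, hY⟩
    by_cases hxQ : x ∈ Q
    · exact hQY hxQ
    rcases hx with hx | ⟨hxC, C', hC', hC'x⟩
    · exact absurd hx hxQ
    obtain ⟨B, hBQ, hB⟩ := aux_dgen hφ (T := Q) (x := x)
      (fun t ht => aux_qpt hφ hstd hC hnji hQ hQC ht) hxQ (by rwa [hQC])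
    have hxm : x ∈ C' \ G := by rw [hC'x]; rfl
    have key : ∀ B', IsDGen φ x B' → φ B' ⊆ C → φ B' = C := by
      intro B' hB' hs
      by_contra hc
      obtain ⟨L, hL, hBL⟩ := aux_exists_pred hC (aux_cl hφ B') (hs.ssubset_of_ne hc)
      have hCL : C' ⊆ L := by
        intro z hz
        by_cases hzG : z ∈ G
        · exact hGle _ hL hzG
        · have : z ∈ C' \ G := ⟨hz, hzG⟩
          rw [hC'x] at this
          rw [show z = x from this]
          exact hBL hB'.1
      have hBG : B' ⊆ G := by
        intro b hb
        by_contra hbG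
        have : b ∈ C' \ G := ⟨huniq _ _ _ hC' hL hCL (hBL (hφ.1 _ hb)), hbG⟩
        rw [hC'x] at this
        obtain rfl : b = x := this
        exact hB'.2.1 (mem_iUnion₂.2 ⟨b, hb, aux_pt hφ b⟩)
      exact hxm.2 (aux_le hφ hGcl hBG hB'.1)
    have hBC : φ B = C := key B hB (hQC ▸ hφ.2.2 _ _ hBQ)
    have hE : IsEGen φ x B := ⟨hB, fun B' hB' hs => by
      rw [hBC] at hs ⊢
      exact key B' hB' hs⟩
    exact hY (B, {x}) (Or.inr ⟨x, B, rfl, hE⟩) (hBQ.trans hQY) rfl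

end EBaseFormal
end
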